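/- arXiv:1710.05117 — 6 statements merged into one kernel-verified Lean document; each statement's English description precedes it below -/
import Mathlib

section
/- Let T be a finite tree and let F be a finite nonempty family of subtrees of T (i.e., nonempty connected subgraphs of T). If every two subtrees in F share at least one vertex of T, then there is a vertex of T that belongs to all subtrees in F. -/
def PathConvex {V : Type} (T : SimpleGraph V) (s : Set V) : Prop :=
  ∀ u ∈ s, ∀ v ∈ s, ∀ p : T.Walk u v, p.IsPath → ∀ x ∈ p.support, x ∈ s

theorem pathConvex_inter {V : Type} {T : SimpleGraph V} {s t : Set V}
    (hs : PathConvex T s) (ht : PathConvex T t) : PathConvex T (s ∩ t) :=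
  fun u hu v hv p hp x hx =>
    ⟨hs u hu.1 v hv.1 p hp x hx, ht u hu.2 v hv.2 p hp x hx⟩

theorem pathConvex_verts {V : Type} {T : SimpleGraph V} (hT : T.IsTree) (H : T.Subgraph)
    (hH : H.Connected) : PathConvex T H.verts := by
  intro u hu v hv p hp x hx
  obtain ⟨q, hq⟩ := (hH.coe.preconnected ⟨u, hu⟩ ⟨v, hv⟩).exists_isPath
  have hq' : (q.map H.hom).IsPath :=
    SimpleGraph.Walk.IsPath.map SimpleGraph.Subgraph.hom_injective hq
  have := (hT.existsUnique_path u v).unique hp hq'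
  rw [this] at hx
  replace hx : x ∈ q.support.map H.hom := (SimpleGraph.Walk.support_map H.hom q) ▸ hx
  obtain ⟨y, -, rfl⟩ := List.mem_map.1 hx
  exact y.2

theorem helly_three {V : Type} {T : SimpleGraph V} (hT : T.IsTree) {A B C : Set V}
    (hA : PathConvex T A) (hB : PathConvex T B) (hC : PathConvex T C)
    (hAB : (A ∩ B).Nonempty) (hBC : (B ∩ C).Nonempty) (hAC : (A ∩ C).Nonempty) :
    (A ∩ B ∩ C).Nonempty := by
  classical
  obtain ⟨a, haA, haB⟩ := hAB
  obtain ⟨b, hbB, hbC⟩ := hBC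
  obtain ⟨c, hcA, hcC⟩ := hAC
  obtain ⟨p, hp⟩ := (hT.1.preconnected a b).exists_isPath
  obtain ⟨q, hq⟩ := (hT.1.preconnected c a).exists_isPath
  obtain ⟨m, hmp, hmq, hm⟩ := q.exists_mem_support_forall_mem_support_imp_eq p.support.toFinset
    ⟨a, by simp⟩
  rw [List.mem_toFinset] at hmp
  have h1 : (q.takeUntil m hmq).IsPath := hq.takeUntil hmq
  have h2 : (p.dropUntil m hmp).IsPath := hp.dropUntil hmp
  have h3 : ((q.takeUntil m hmq).append (p.dropUntil m hmp)).IsPath := by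
    rw [SimpleGraph.Walk.isPath_def, SimpleGraph.Walk.support_append, List.nodup_append']
    refine ⟨h1.support_nodup, h2.support_nodup.tail, ?_⟩
    intro x hx hx'
    have hxm : x = m := hm x (List.mem_toFinset.2
      (p.support_dropUntil_subset_support hmp (List.mem_of_mem_tail hx'))) hx
    subst hxm
    have := h2.support_nodup
    rw [← SimpleGraph.Walk.cons_tail_support] at this
    exact (List.nodup_cons.1 this).1 hx'
  refine ⟨m, ⟨hA c hcA a haA q hq m hmq, hB a haB b hbB p hp m hmp⟩,
    hC c hcC b hbC _ h3 m ?_⟩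
  simp

theorem helly_finset {V : Type} {T : SimpleGraph V} (hT : T.IsTree) (I : Finset T.Subgraph) :
    ∀ K : Set V, PathConvex T K → K.Nonempty →
    (∀ H ∈ I, H.Connected) →
    (∀ H ∈ I, (K ∩ H.verts).Nonempty) →
    (∀ H ∈ I, ∀ L ∈ I, (H.verts ∩ L.verts).Nonempty) →
    (K ∩ ⋂ H ∈ I, H.verts).Nonempty := by
  classical
  induction I using Finset.induction_on with
  | empty => intro K _ hK _ _ _; simpa using hK
  | insert A I _ ih =>
    intro K hKc hK hconn hKI hI
    have hA := pathConvex_verts hT A (hconn A (by simp))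
    have := ih (K ∩ A.verts) (pathConvex_inter hKc hA) (hKI A (by simp))
      (fun H hH => hconn H (by simp [hH]))
      (fun H hH => helly_three hT hKc hA (pathConvex_verts hT H (hconn H (by simp [hH])))
        (hKI A (by simp)) (hI A (by simp) H (by simp [hH])) (hKI H (by simp [hH])))
      (fun H hH L hL => hI H (by simp [hH]) L (by simp [hL]))
    rw [Finset.set_biInter_insert, ← Set.inter_assoc]
    exact this


/-- **Helly property for subtrees of a tree.**
Let `T` be a finite tree and `F` a finite nonempty family of subtrees of `T`
(nonempty connected subgraphs of `T`). If every two subtrees in `F` share at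
least one vertex of `T`, then some vertex of `T` belongs to all subtrees in `F`. -/
theorem helly_subtrees {V : Type} [Fintype V] (T : SimpleGraph V) (hT : T.IsTree)
    (F : Set T.Subgraph) (hFfin : F.Finite) (hFne : F.Nonempty)
    (hconn : ∀ H ∈ F, H.Connected)
    (hpair : ∀ H ∈ F, ∀ K ∈ F, (H.verts ∩ K.verts).Nonempty) :
    (⋂ H ∈ F, H.verts).Nonempty := by
  obtain ⟨H₀, hH₀⟩ := hFne
  obtain ⟨v, -, hv⟩ := helly_finset hT hFfin.toFinset Set.univ (fun _ _ _ _ _ _ _ _ => trivial)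
    ((hconn H₀ hH₀).nonempty.mono (Set.subset_univ _))
    (fun H hH => hconn H (hFfin.mem_toFinset.1 hH))
    (fun H hH => by simpa using (hconn H (hFfin.mem_toFinset.1 hH)).nonempty)
    (fun H hH L hL => hpair H (hFfin.mem_toFinset.1 hH) L (hFfin.mem_toFinset.1 hL))
  exact ⟨v, by simpa using hv⟩
end

section
/- For every finite simple graph G, the function mm_G : 2^{V(G)} → ℤ is submodular: for all A, B ⊆ V(G), mm_G(A) + mm_G(B) ≥ mm_G(A ∪ B) + mm_G(A ∩ B). -/
/-- `mm G A` is the maximum size (number of edges) of a matching in `G` all of whose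
edges have one endpoint in `A` and the other endpoint in `V(G) \ A`. -/
noncomputable def mm {α : Type} [Fintype α] (G : SimpleGraph α) (A : Set α) : ℕ :=
  sSup {n : ℕ | ∃ M : G.Subgraph, M.IsMatching ∧
    (∀ u v : α, M.Adj u v → (u ∈ A ↔ v ∉ A)) ∧ M.edgeSet.ncard = n}

def IsCov {α : Type} (G : SimpleGraph α) (A : Set α) (C : Finset α) : Prop :=
  ∀ u v, G.Adj u v → u ∈ A → v ∉ A → u ∈ C ∨ v ∈ C

lemma matching_le {α : Type} [Fintype α] (G : SimpleGraph α) (A : Set α) (C : Finset α)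
    (hC : IsCov G A C) (M : G.Subgraph) (hM : M.IsMatching)
    (hA : ∀ u v : α, M.Adj u v → (u ∈ A ↔ v ∉ A)) : M.edgeSet.ncard ≤ C.card := by
  classical
  have h : ∀ e : Sym2 α, e ∈ M.edgeSet → ∃ c, c ∈ e ∧ c ∈ C := by
    intro e
    induction e with
    | _ u v =>
      intro he
      have he' : M.Adj u v := he
      have h1 := hA u v he'
      by_cases hu : u ∈ A
      · rcases hC u v he'.adj_sub hu (h1.1 hu) with h | h
        · exact ⟨u, by simp, h⟩
        · exact ⟨v, by simp, h⟩
      · have hv : v ∈ A := by tauto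
        rcases hC v u he'.adj_sub.symm hv hu with h | h
        · exact ⟨v, by simp, h⟩
        · exact ⟨u, by simp, h⟩
  have h' : ∀ e : Sym2 α, ∃ c, e ∈ M.edgeSet → c ∈ e ∧ c ∈ C := by
    intro e
    by_cases he : e ∈ M.edgeSet
    · obtain ⟨c, hc⟩ := h e he
      exact ⟨c, fun _ => hc⟩
    · exact ⟨e.out.1, fun h => absurd h he⟩
  choose f hf using h'
  have hf1 := fun e he => (hf e he).1
  have hf2 := fun e he => (hf e he).2
  rw [← Set.ncard_coe_finset C]
  refine Set.ncard_le_ncard_of_injOn f (fun e he => hf2 e he) ?_ (Set.toFinite _)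
  intro e he e' he' hee
  have key : ∀ e : Sym2 α, ∀ c, e ∈ M.edgeSet → c ∈ e → ∃ w, M.Adj c w ∧ e = s(c, w) := by
    intro e c he hc
    obtain ⟨w, rfl⟩ := Sym2.mem_iff_exists.1 hc
    exact ⟨w, he, rfl⟩
  obtain ⟨w, hw, h1⟩ := key e _ he (hf1 e he)
  obtain ⟨w', hw', h2⟩ := key e' _ he' (hf1 e' he')
  rw [← hee] at hw' h2
  have := (hM hw.fst_mem).unique hw hw'
  rw [h1, h2, this]

lemma mm_le {α : Type} [Fintype α] (G : SimpleGraph α) (A : Set α) (C : Finset α)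
    (hC : IsCov G A C) : mm G A ≤ C.card := by
  apply csSup_le'
  rintro n ⟨M, hM, hA, rfl⟩
  exact matching_le G A C hC M hM hA

lemma hall_side {α : Type} [Fintype α] (G : SimpleGraph α) (A : Set α) (C : Finset α)
    (hC : IsCov G A C) (hmin : ∀ D, IsCov G A D → C.card ≤ D.card) :
    ∃ f : {c // c ∈ C ∧ c ∈ A} → α, Function.Injective f ∧
      ∀ c, G.Adj c.1 (f c) ∧ f c ∉ A ∧ f c ∉ C := by
  classical
  have := (Finset.all_card_le_biUnion_card_iff_exists_injective
    (fun c : {c // c ∈ C ∧ c ∈ A} =>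
      (Finset.univ.filter fun v => G.Adj c.1 v ∧ v ∉ A ∧ v ∉ C : Finset α))).1 ?_
  · obtain ⟨f, hf, h⟩ := this
    exact ⟨f, hf, fun c => by simpa using h c⟩
  intro S
  set N := S.biUnion (fun c : {c // c ∈ C ∧ c ∈ A} =>
      (Finset.univ.filter fun v => G.Adj c.1 v ∧ v ∉ A ∧ v ∉ C : Finset α)) with hN
  set S' : Finset α := S.map (Function.Embedding.subtype _) with hS'
  have hsub : S' ⊆ C := by
    intro x hx
    simp only [hS', Finset.mem_map] at hx
    obtain ⟨a, -, rfl⟩ := hx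
    exact a.2.1
  have hcov : IsCov G A ((C \ S') ∪ N) := by
    intro u v huv hu hv
    by_cases hvC : v ∈ C
    · right
      have : v ∉ S' := by
        intro hx
        simp only [hS', Finset.mem_map] at hx
        obtain ⟨a, -, rfl⟩ := hx
        exact hv a.2.2
      simp [hvC, this]
    · have huC : u ∈ C := (hC u v huv hu hv).resolve_right hvC
      by_cases huS : u ∈ S'
      · right
        simp only [hS', Finset.mem_map] at huS
        obtain ⟨a, ha, rfl⟩ := huS
        refine Finset.mem_union_right _ (Finset.mem_biUnion.2 ⟨a, ha, ?_⟩)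
        simpa using ⟨huv, hv, hvC⟩
      · left
        simp [huC, huS]
  have h1 := hmin _ hcov
  have h2 := Finset.card_union_le (C \ S') N
  have h3 := Finset.card_sdiff_add_card_eq_card hsub
  have h4 : S'.card = S.card := Finset.card_map _
  omega

lemma IsCov.compl {α : Type} {G : SimpleGraph α} {A : Set α} {C : Finset α}
    (h : IsCov G A C) : IsCov G Aᶜ C := by
  intro u v huv hu hv
  have := h v u huv.symm (by simpa using hv) (by simpa using hu)
  tauto

lemma exists_cov {α : Type} [Fintype α] (G : SimpleGraph α) (A : Set α) :
    ∃ C : Finset α, IsCov G A C ∧ C.card ≤ mm G A := by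
  classical
  obtain ⟨C, hC, hmin⟩ : ∃ C : Finset α, IsCov G A C ∧ ∀ D, IsCov G A D → C.card ≤ D.card := by
    obtain ⟨C, hC, h⟩ := Set.exists_min_image {C : Finset α | IsCov G A C} Finset.card
      (Set.toFinite _) ⟨Finset.univ, fun u v _ _ _ => by simp⟩
    exact ⟨C, hC, h⟩
  refine ⟨C, hC, ?_⟩
  obtain ⟨f, hf, hf'⟩ := hall_side G A C hC hmin
  obtain ⟨g, hg, hg'⟩ := hall_side G Aᶜ C hC.compl
    (fun D hD => hmin D (by simpa using hD.compl))
  obtain ⟨p, hp1, hp2, hp3, hp4⟩ : ∃ p : α → α, (∀ c ∈ C, G.Adj c (p c)) ∧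
      (∀ c ∈ C, p c ∉ C) ∧ (∀ c ∈ C, (c ∈ A ↔ p c ∉ A)) ∧
      (∀ c ∈ C, ∀ d ∈ C, p c = p d → c = d) := by
    have hex : ∀ c, ∃ w, ∀ hc : c ∈ C, (∀ h : c ∈ A, w = f ⟨c, hc, h⟩) ∧
        (∀ h : c ∈ Aᶜ, w = g ⟨c, hc, h⟩) := by
      intro c
      by_cases hc : c ∈ C
      · by_cases h : c ∈ A
        · exact ⟨f ⟨c, hc, h⟩, fun _ => ⟨fun _ => rfl, fun h' => absurd h h'⟩⟩
        · exact ⟨g ⟨c, hc, h⟩, fun _ => ⟨fun h' => absurd h' h, fun _ => rfl⟩⟩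
      · exact ⟨c, fun h => absurd h hc⟩
    choose p hp using hex
    have hpf := fun c hc => (hp c hc).1
    have hpg := fun c hc => (hp c hc).2
    have h3 : ∀ c ∈ C, (c ∈ A ↔ p c ∉ A) := by
      intro c hc
      by_cases h : c ∈ A
      · rw [hpf c hc h]
        have := (hf' ⟨c, hc, h⟩).2.1
        tauto
      · rw [hpg c hc h]
        have := (hg' ⟨c, hc, h⟩).2.1
        simp only [Set.mem_compl_iff] at this
        tauto
    refine ⟨p, ?_, ?_, h3, ?_⟩
    · intro c hc
      by_cases h : c ∈ A
      · rw [hpf c hc h]; exact (hf' ⟨c, hc, h⟩).1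
      · rw [hpg c hc h]; exact (hg' ⟨c, hc, h⟩).1
    · intro c hc
      by_cases h : c ∈ A
      · rw [hpf c hc h]; exact (hf' ⟨c, hc, h⟩).2.2
      · rw [hpg c hc h]; exact (hg' ⟨c, hc, h⟩).2.2
    · intro c hc d hd hcd
      have hc3 := h3 c hc
      have hd3 := h3 d hd
      rw [hcd] at hc3
      by_cases h : c ∈ A
      · have h' : d ∈ A := by tauto
        rw [hpf c hc h, hpf d hd h'] at hcd
        simpa using hf hcd
      · have h' : d ∉ A := by tauto
        rw [hpg c hc h, hpg d hd h'] at hcd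
        simpa using hg hcd
  let M : G.Subgraph :=
    { verts := {u | ∃ v, (u ∈ C ∧ p u = v) ∨ (v ∈ C ∧ p v = u)}
      Adj := fun u v => (u ∈ C ∧ p u = v) ∨ (v ∈ C ∧ p v = u)
      adj_sub := by
        rintro u v (⟨h, rfl⟩ | ⟨h, rfl⟩)
        · exact hp1 _ h
        · exact (hp1 _ h).symm
      edge_vert := fun {u v} h => ⟨v, h⟩
      symm := ⟨fun u v h => h.symm⟩ }
  have hMm : M.IsMatching := by
    rintro u ⟨v, hv⟩
    refine ⟨v, hv, ?_⟩
    intro w hw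
    change (u ∈ C ∧ p u = w) ∨ (w ∈ C ∧ p w = u) at hw
    rcases hv with ⟨h, h1⟩ | ⟨h, h1⟩ <;> rcases hw with ⟨h', h1'⟩ | ⟨h', h1'⟩
    · rw [← h1, ← h1']
    · exact absurd h (h1' ▸ hp2 w h')
    · exact absurd h' (h1 ▸ hp2 v h)
    · exact hp4 _ h' _ h (h1'.trans h1.symm)
  have hMA : ∀ u v : α, M.Adj u v → (u ∈ A ↔ v ∉ A) := by
    rintro u v (⟨h, rfl⟩ | ⟨h, rfl⟩)
    · exact hp3 _ h
    · have := hp3 _ h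
      tauto
  have hcard : C.card ≤ M.edgeSet.ncard := by
    rw [← Set.ncard_coe_finset C]
    refine Set.ncard_le_ncard_of_injOn (fun c => s(c, p c)) ?_ ?_ (Set.toFinite _)
    · intro c hc
      exact Or.inl ⟨hc, rfl⟩
    · intro c hc d hd h
      simp only [Sym2.eq_iff] at h
      rcases h with h | h
      · exact h.1
      · exact absurd hc (h.1 ▸ hp2 d hd)
  refine hcard.trans (le_csSup ⟨C.card, ?_⟩ ⟨M, hMm, hMA, rfl⟩)
  rintro n ⟨M, hM, hA, rfl⟩
  exact matching_le G A C hC M hM hA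

/-- For every finite simple graph `G`, the function `mm G` is submodular:
for all `A, B ⊆ V(G)`, `mm G A + mm G B ≥ mm G (A ∪ B) + mm G (A ∩ B)`. -/
theorem mm_submodular {α : Type} [Fintype α] (G : SimpleGraph α) (A B : Set α) :
    mm G (A ∪ B) + mm G (A ∩ B) ≤ mm G A + mm G B := by
  classical
  obtain ⟨C, hC, hC'⟩ := exists_cov G A
  obtain ⟨D, hD, hD'⟩ := exists_cov G B
  let U : Finset α := Finset.univ.filter fun x =>
    if x ∈ A then (if x ∈ B then x ∈ C ∧ x ∈ D else x ∈ C)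
    else (if x ∈ B then x ∈ D else x ∈ C ∨ x ∈ D)
  let I : Finset α := Finset.univ.filter fun x =>
    if x ∈ A then (if x ∈ B then x ∈ C ∨ x ∈ D else x ∈ D)
    else (if x ∈ B then x ∈ C else x ∈ C ∧ x ∈ D)
  have hU : IsCov G (A ∪ B) U := by
    intro u v huv hu hv
    have h1 := hC u v huv
    have h2 := hD u v huv
    simp only [U, Finset.mem_filter, Finset.mem_univ, true_and]
    simp only [Set.mem_union] at hu hv
    split_ifs <;> tauto
  have hI : IsCov G (A ∩ B) I := by
    intro u v huv hu hv
    have h1 := hC u v huv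
    have h2 := hD u v huv
    simp only [I, Finset.mem_filter, Finset.mem_univ, true_and]
    simp only [Set.mem_inter_iff] at hu hv
    split_ifs <;> tauto
  have hcard : U.card + I.card = C.card + D.card := by
    have e : ∀ S : Finset α, S.card = ∑ x, if x ∈ S then 1 else 0 := by
      intro S; simp
    rw [e U, e I, e C, e D, ← Finset.sum_add_distrib, ← Finset.sum_add_distrib]
    refine Finset.sum_congr rfl fun x _ => ?_
    simp only [U, I, Finset.mem_filter, Finset.mem_univ, true_and]
    by_cases x ∈ A <;> by_cases x ∈ B <;> by_cases x ∈ C <;> by_cases x ∈ D <;> simp [*]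
  have := mm_le G _ U hU
  have := mm_le G _ I hI
  omega
end

section
/- Let G be a split graph with clique part C = C(G) of size 3k, k ≥ 1, and suppose (T, {T_x}_{x∈V(G)}) is a tree-representation of G in which every edge of T belongs to at most k of the subtrees T_x. Then C can be partitioned into three subsets C_1, C_2, C_3, each of size k, such that for each vertex w in the independent part I(G), the neighborhood N_G(w) is contained in one of C_1, C_2, C_3. -/
open SimpleGraph in
theorem reach_of_not_mem {V : Type} {T : SimpleGraph V} (H : T.Subgraph) (hH : H.Connected)
    (v n : V) (he : ¬ H.Adj v n) {a b : V} (ha : a ∈ H.verts) (hb : b ∈ H.verts) :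
    (T.deleteEdges {s(v, n)}).Reachable a b := by
  have h := hH.preconnected.coe ⟨a, ha⟩ ⟨b, hb⟩
  let φ : H.coe →g (T.deleteEdges {s(v, n)}) :=
    ⟨fun x => x.1, by
      intro x y hxy
      rw [deleteEdges_adj]
      refine ⟨H.adj_sub hxy, ?_⟩
      intro hm
      apply he
      rw [← Subgraph.mem_edgeSet, ← (Set.mem_singleton_iff.1 hm)]
      exact hxy⟩
  exact h.map φ

open SimpleGraph in
theorem adj_of_sides {V : Type} {T : SimpleGraph V} (hT : T.IsTree) (H : T.Subgraph)
    (hH : H.Connected) {v n a : V} (hvn : T.Adj v n)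
    (hv : v ∈ H.verts) (ha : a ∈ H.verts) (hr : (T.deleteEdges {s(v, n)}).Reachable n a) :
    H.Adj v n := by
  by_contra hc
  have h1 := reach_of_not_mem H hH v n hc hv ha
  have hb := isAcyclic_iff_forall_adj_isBridge.1 hT.isAcyclic hvn
  rw [isBridge_iff] at hb
  exact hb (h1.trans hr.symm)

open SimpleGraph in
theorem reach_of_path {V : Type} {T : SimpleGraph V} {v n a : V} (q : T.Walk n a)
    (hq : v ∉ q.support) : (T.deleteEdges {s(v, n)}).Reachable n a := by
  refine ⟨q.toDeleteEdges _ ?_⟩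
  rintro e he hm
  rw [Set.mem_singleton_iff] at hm
  subst hm
  exact hq (q.fst_mem_support_of_mem_edges he)

open SimpleGraph in
theorem exists_step {V : Type} {T : SimpleGraph V} (hT : T.IsTree) {v a : V} (hva : v ≠ a) :
    ∃ n, T.Adj v n ∧ (T.deleteEdges {s(v, n)}).Reachable n a := by
  obtain ⟨p, hp⟩ := (hT.connected v a).exists_isPath
  cases p with
  | nil => exact absurd rfl hva
  | cons h q =>
    rw [Walk.cons_isPath_iff] at hp
    exact ⟨_, h, reach_of_path q hp.2⟩

open SimpleGraph in
theorem gate {V : Type} {T : SimpleGraph V} (hT : T.IsTree) (K : T.Subgraph) (hK : K.Connected)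
    {v z : V} (p : T.Walk v z) (hp : p.IsPath) (hz : z ∈ K.verts) :
    ∃ u ∈ K.verts, ∀ H : T.Subgraph, H.Connected → v ∈ H.verts →
      (H.verts ∩ K.verts).Nonempty → u ∈ H.verts := by
  induction p with
  | nil => exact ⟨_, hz, fun H _ h _ => h⟩
  | @cons v n z h q ih =>
    by_cases hv : v ∈ K.verts
    · exact ⟨v, hv, fun H _ h _ => h⟩
    rw [Walk.cons_isPath_iff] at hp
    obtain ⟨u, hu, huH⟩ := ih hp.1 hz
    refine ⟨u, hu, fun H hH hvH hne => huH H hH ?_ hne⟩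
    obtain ⟨t, htH, htK⟩ := hne
    have h1 := reach_of_not_mem K hK v n (fun hc => hv (K.edge_vert hc)) hz htK
    exact (adj_of_sides hT H hH h hvH htH ((reach_of_path q hp.2).trans h1)).snd_mem

open SimpleGraph in
theorem helly {α V : Type} {T : SimpleGraph V} (hT : T.IsTree) (f : α → T.Subgraph)
    (hconn : ∀ x, (f x).Connected) (S : Finset α)
    (hS : ∀ x ∈ S, ∀ y ∈ S, ((f x).verts ∩ (f y).verts).Nonempty) :
    ∃ v, ∀ x ∈ S, v ∈ (f x).verts := by
  classical
  induction S using Finset.induction_on with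
  | empty => 
    obtain ⟨v⟩ := hT.connected.nonempty
    exact ⟨v, by simp⟩
  | insert x S hx ih =>
    obtain ⟨v, hv⟩ := ih (fun a ha b hb =>
      hS a (Finset.mem_insert_of_mem ha) b (Finset.mem_insert_of_mem hb))
    obtain ⟨z, hz, -⟩ := hS x (Finset.mem_insert_self _ _) x (Finset.mem_insert_self _ _)
    obtain ⟨p, hp⟩ := (hT.connected v z).exists_isPath
    obtain ⟨u, hu, huH⟩ := gate hT (f x) (hconn x) p hp hz
    refine ⟨u, fun y hy => ?_⟩
    rcases Finset.mem_insert.1 hy with rfl | hy'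
    · exact hu
    · exact huH _ (hconn y) (hv y hy') (hS y hy x (Finset.mem_insert_self _ _))


/-- Let `G` be a split graph — `V(G)` partitioned into a clique `Cs = C(G)` and an
independent set `Is = I(G)` — with `|C(G)| = 3k`, `k ≥ 1`, and let `(T, {f x}_{x ∈ V(G)})`
be a tree-representation of `G` (T a finite ternary tree, each `f x` a nontrivial subtree,
adjacent vertices of `G` getting subtrees sharing a vertex) in which every edge of `T`
belongs to at most `k` of the subtrees. Then `C(G)` can be partitioned into three subsets
`C 0, C 1, C 2`, each of size `k`, such that for each `w ∈ I(G)` the neighborhood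
`N_G(w)` is contained in one of the three subsets. -/
theorem split_graph_tree_rep_partition {α V : Type} [Fintype α] [Fintype V]
    (G : SimpleGraph α)
    (Cs Is : Set α) (hdisj : Disjoint Cs Is) (hcover : Cs ∪ Is = Set.univ)
    (hclique : G.IsClique Cs) (hindep : ∀ u ∈ Is, ∀ v ∈ Is, ¬ G.Adj u v)
    (k : ℕ) (hk : 1 ≤ k) (hCcard : Cs.ncard = 3 * k)
    (T : SimpleGraph V) (hT : T.IsTree)
    (hternary : ∀ v : V, (T.neighborSet v).ncard = 1 ∨ (T.neighborSet v).ncard = 3)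
    (f : α → T.Subgraph)
    (hconn : ∀ x : α, (f x).Connected)
    (hnontrivial : ∀ x : α, (f x).edgeSet.Nonempty)
    (hadj : ∀ u v : α, G.Adj u v → ((f u).verts ∩ (f v).verts).Nonempty)
    (hload : ∀ e ∈ T.edgeSet, {x : α | e ∈ (f x).edgeSet}.ncard ≤ k) :
    ∃ C : Fin 3 → Set α,
      (∀ i j : Fin 3, i ≠ j → Disjoint (C i) (C j)) ∧
      (⋃ i, C i) = Cs ∧
      (∀ i, (C i).ncard = k) ∧
      (∀ w ∈ Is, ∃ i : Fin 3, G.neighborSet w ⊆ C i) := by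
  classical
  obtain ⟨v, hv⟩ := helly hT f hconn Cs.toFinset (by
    intro x hx y hy
    rw [Set.mem_toFinset] at hx hy
    by_cases hxy : x = y
    · subst hxy
      obtain ⟨z, hz⟩ := (hconn x).nonempty
      exact ⟨z, hz, hz⟩
    · exact hadj x y (hclique hx hy hxy))
  simp only [Set.mem_toFinset] at hv
  have hother : ∀ x, ∃ a ∈ (f x).verts, v ≠ a := by
    intro x
    obtain ⟨e, he⟩ := hnontrivial x
    induction e using Sym2.ind with
    | _ a b =>
      rw [SimpleGraph.Subgraph.mem_edgeSet] at he
      by_cases h : v = a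
      · exact ⟨b, he.snd_mem, h ▸ he.ne⟩
      · exact ⟨a, he.fst_mem, h⟩
  have hedge : ∀ x ∈ Cs, ∃ n, T.Adj v n ∧ (f x).Adj v n := by
    intro x hx
    obtain ⟨a, ha, hva⟩ := hother x
    obtain ⟨n, hn, hr⟩ := exists_step hT hva
    exact ⟨n, hn, adj_of_sides hT _ (hconn x) hn (hv x hx) ha hr⟩
  have hle : ∀ n, T.Adj v n → {x : α | (f x).Adj v n}.ncard ≤ k := fun n hn => hload s(v, n) hn
  rcases hternary v with h1 | h3
  · exfalso
    obtain ⟨n, hn⟩ := Set.ncard_eq_one.1 h1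
    have hvn : T.Adj v n := by
      rw [← SimpleGraph.mem_neighborSet, hn]; rfl
    have hsub : Cs ⊆ {x : α | (f x).Adj v n} := by
      intro x hx
      obtain ⟨m, hm, hxm⟩ := hedge x hx
      rw [← SimpleGraph.mem_neighborSet, hn, Set.mem_singleton_iff] at hm
      exact hm ▸ hxm
    have := Set.ncard_le_ncard hsub (Set.toFinite _)
    have := hle n hvn
    omega
  obtain ⟨n0, n1, n2, -, -, -, hN⟩ := Set.ncard_eq_three.1 h3
  have hmem : ∀ m, T.Adj v m ↔ m = n0 ∨ m = n1 ∨ m = n2 := by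
    intro m
    rw [← SimpleGraph.mem_neighborSet, hN]; simp
  let A : V → Finset α := fun n => Finset.univ.filter (fun x => x ∈ Cs ∧ (f x).Adj v n)
  let B : V → Finset α := fun n => Finset.univ.filter (fun x => (f x).Adj v n)
  have hAB : ∀ n, A n ⊆ B n := by
    intro n x hx
    simp only [A, B, Finset.mem_filter] at hx ⊢
    exact ⟨hx.1, hx.2.2⟩
  have hB : ∀ n, T.Adj v n → (B n).card ≤ k := by
    intro n hn
    have := hle n hn
    rw [Set.ncard_eq_toFinset_card'] at this
    convert this using 2
    ext x; simp [B]
  have hU : Cs.toFinset = A n0 ∪ (A n1 ∪ A n2) := by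
    ext x
    simp only [Set.mem_toFinset, A, Finset.mem_union, Finset.mem_filter, Finset.mem_univ, true_and]
    constructor
    · intro hx
      obtain ⟨m, hm, hxm⟩ := hedge x hx
      rcases (hmem m).1 hm with rfl | rfl | rfl <;> simp [hx, hxm]
    · tauto
  have hc : (A n0 ∪ (A n1 ∪ A n2)).card = 3 * k := by
    rw [← hU, ← Set.ncard_eq_toFinset_card', hCcard]
  have e1 := Finset.card_union_add_card_inter (A n0) (A n1 ∪ A n2)
  have e2 := Finset.card_union_add_card_inter (A n1) (A n2)
  have b0 := hB n0 ((hmem _).2 (by simp))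
  have b1 := hB n1 ((hmem _).2 (by simp))
  have b2 := hB n2 ((hmem _).2 (by simp))
  have a0 := Finset.card_le_card (hAB n0)
  have a1 := Finset.card_le_card (hAB n1)
  have a2 := Finset.card_le_card (hAB n2)
  have d12 : Disjoint (A n1) (A n2) := by
    rw [Finset.disjoint_iff_inter_eq_empty, ← Finset.card_eq_zero]; omega
  have d0 : Disjoint (A n0) (A n1 ∪ A n2) := by
    rw [Finset.disjoint_iff_inter_eq_empty, ← Finset.card_eq_zero]; omega
  rw [Finset.disjoint_union_right] at d0
  have hfull : ∀ n, T.Adj v n → (A n).card = k ∧ A n = B n := by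
    intro n hn
    rcases (hmem n).1 hn with rfl | rfl | rfl
    · exact ⟨by omega, Finset.eq_of_subset_of_card_le (hAB _) (by omega)⟩
    · exact ⟨by omega, Finset.eq_of_subset_of_card_le (hAB _) (by omega)⟩
    · exact ⟨by omega, Finset.eq_of_subset_of_card_le (hAB _) (by omega)⟩
  let N : Fin 3 → V := ![n0, n1, n2]
  have hNadj : ∀ i, T.Adj v (N i) := by
    intro i
    rw [hmem]
    fin_cases i <;> simp [N]
  have hNsurj : ∀ m, T.Adj v m → ∃ i, N i = m := by
    intro m hm
    rcases (hmem m).1 hm with rfl | rfl | rfl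
    · exact ⟨0, rfl⟩
    · exact ⟨1, rfl⟩
    · exact ⟨2, rfl⟩
  refine ⟨fun i => (A (N i) : Set α), ?_, ?_, ?_, ?_⟩
  · intro i j hij
    rw [Finset.disjoint_coe]
    fin_cases i <;> fin_cases j <;>
      first
        | exact absurd rfl hij
        | exact d0.1
        | exact d0.2
        | exact d12
        | exact d0.1.symm
        | exact d0.2.symm
        | exact d12.symm
  · ext x
    simp only [Set.mem_iUnion, Finset.mem_coe, A, Finset.mem_filter, Finset.mem_univ, true_and]
    constructor
    · rintro ⟨i, hi, -⟩; exact hi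
    · intro hx
      obtain ⟨m, hm, hxm⟩ := hedge x hx
      obtain ⟨i, rfl⟩ := hNsurj m hm
      exact ⟨i, hx, hxm⟩
  · intro i
    rw [Set.ncard_coe_finset]
    exact (hfull _ (hNadj i)).1
  · intro w hw
    obtain ⟨a, ha, hva⟩ := hother w
    obtain ⟨n, hn, hr⟩ := exists_step hT hva
    obtain ⟨i, rfl⟩ := hNsurj n hn
    refine ⟨i, fun x hx => ?_⟩
    rw [SimpleGraph.mem_neighborSet] at hx
    have hxC : x ∈ Cs := by
      have : x ∈ Cs ∪ Is := hcover ▸ Set.mem_univ x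
      rcases this with h | h
      · exact h
      · exact absurd hx (hindep w hw x h)
    have hwn : ¬ (f w).Adj v (N i) := by
      intro hc
      have : w ∈ B (N i) := by simp [B, hc]
      rw [← (hfull _ hn).2] at this
      simp only [A, Finset.mem_filter] at this
      exact Set.disjoint_left.1 hdisj this.2.1 hw
    obtain ⟨t, htw, htx⟩ := hadj w x hx
    have h2 := reach_of_not_mem (f w) (hconn w) v (N i) hwn ha htw
    have h3 := adj_of_sides hT (f x) (hconn x) hn (hv x hxC) htx (hr.trans h2)
    simp [A, hxC, h3]
end

section
/- Let G be a split graph with clique part C(G) of size 3k, k ≥ 1, and suppose C(G) can be partitioned into three subsets C_1, C_2, C_3, each of size k, such that for each vertex w in the independent part I(G), the neighborhood N_G(w) is contained in one of C_1, C_2, C_3. Then there exists a tree-representation (T, {T_x}_{x∈V(G)}) of G in which every edge of T belongs to at most k of the subtrees T_x. -/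
open SimpleGraph in
lemma aux_conn {V : Type} (p : V → V) (r : V → ℕ) (o : V) (hr : ∀ v, v ≠ o → r (p v) < r v)
    (S : Set V) (ho : o ∈ S) (hS : ∀ v ∈ S, p v ∈ S) :
    ((SimpleGraph.fromRel (fun a b => p a = b)).induce S).Connected := by
  have key : ∀ n, ∀ v : S, r v.1 = n →
      ((SimpleGraph.fromRel (fun a b => p a = b)).induce S).Reachable v ⟨o, ho⟩ := by
    intro n
    induction n using Nat.strong_induction_on with
    | _ n ih =>
      intro v hv
      by_cases h : v.1 = o
      · have : v = ⟨o, ho⟩ := Subtype.ext h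
        rw [this]
      · have h1 := hr v.1 h
        refine Reachable.trans (Adj.reachable ?_) (ih (r (p v.1)) (by omega) ⟨p v.1, hS _ v.2⟩ rfl)
        simp only [comap_adj, fromRel_adj, Function.Embedding.subtype_apply]
        refine ⟨fun h2 => ?_, by simp⟩
        rw [← h2] at h1
        omega
  have : Nonempty S := ⟨⟨o, ho⟩⟩
  refine ⟨fun u v => (key _ u rfl).trans (key _ v rfl).symm⟩

open SimpleGraph in
lemma aux_tree {V : Type} [Fintype V] (p : V → V) (r : V → ℕ) (o : V)
    (hr : ∀ v, v ≠ o → r (p v) < r v) (hpo : p o = o) :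
    (SimpleGraph.fromRel (fun a b => p a = b)).IsTree := by
  classical
  rw [isTree_iff_connected_and_card]
  have hc : (SimpleGraph.fromRel (fun a b => p a = b)).Connected := by
    have := aux_conn p r o hr Set.univ trivial (fun _ _ => trivial)
    exact (induceUnivIso _).connected_iff.1 this
  refine ⟨hc, ?_⟩
  have he : (SimpleGraph.fromRel (fun a b => p a = b)).edgeSet
      = (fun v => s(v, p v)) '' {v | v ≠ o} := by
    ext e
    induction e with
    | _ a b =>
    simp only [mem_edgeSet, fromRel_adj, Set.mem_image, Set.mem_setOf_eq]
    constructor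
    · rintro ⟨hne, h | h⟩
      · exact ⟨a, fun h' => hne (by rw [← h, h', hpo]), by rw [h]⟩
      · exact ⟨b, fun h' => hne (by rw [← h, h', hpo]), by rw [h, Sym2.eq_swap]⟩
    · rintro ⟨v, hv, h⟩
      have h1 := hr v hv
      have h3 : v ≠ p v := fun h2 => by rw [← h2] at h1; omega
      rcases Sym2.eq_iff.1 h with ⟨rfl, rfl⟩ | ⟨rfl, rfl⟩
      · exact ⟨h3, Or.inl rfl⟩
      · exact ⟨h3.symm, Or.inr rfl⟩
  rw [Nat.card_coe_set_eq, he, Set.ncard_image_of_injOn]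
  · have : {v : V | v ≠ o} = {o}ᶜ := rfl
    rw [this]
    have := Set.ncard_add_ncard_compl ({o} : Set V)
    rw [Set.ncard_singleton] at this
    omega
  · intro a ha b hb h
    rcases Sym2.eq_iff.1 h with ⟨h, _⟩ | ⟨h1, h2⟩
    · exact h
    · have := hr a ha
      have := hr b hb
      rw [← h1] at this
      rw [h2] at *
      omega

def auxP (N : ℕ) : Option (Fin 3 × Fin N) → Option (Fin 3 × Fin N)
  | none => none
  | some (i, m) => if m.1 = 0 then none else some (i, ⟨2 * ((m.1 - 1) / 2), by omega⟩)

def auxR (N : ℕ) : Option (Fin 3 × Fin N) → ℕ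
  | none => 0
  | some (_, m) => m.1 + 1

lemma auxR_lt (N : ℕ) : ∀ v, v ≠ none → auxR N (auxP N v) < auxR N v := by
  rintro (_ | ⟨i, m⟩) h
  · exact absurd rfl h
  · simp only [auxP]
    split_ifs with hm
    · simp [auxR]
    · simp only [auxR]; omega

lemma auxP_ne (N : ℕ) (v) (h : v ≠ none) : v ≠ auxP N v := by
  intro h'
  have := auxR_lt N v h
  rw [← h'] at this
  omega

abbrev auxT (n : ℕ) : SimpleGraph (Option (Fin 3 × Fin (2 * n + 1))) :=
  SimpleGraph.fromRel (fun a b => auxP _ a = b)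

lemma auxT_deg (n : ℕ) (v) :
    ((auxT n).neighborSet v).ncard = 1 ∨ ((auxT n).neighborSet v).ncard = 3 := by
  rcases v with _ | ⟨i, m⟩
  · right
    have : (auxT n).neighborSet none =
        Set.range (fun i : Fin 3 => (some (i, 0) : Option (Fin 3 × Fin (2 * n + 1)))) := by
      ext w
      rcases w with _ | ⟨j, l⟩
      · simp
      · simp only [SimpleGraph.mem_neighborSet, SimpleGraph.fromRel_adj, auxP]
        constructor
        · rintro ⟨_, h | h⟩
          · simp at h
          · split_ifs at h with hl
            exact ⟨j, by rw [show l = 0 from Fin.ext hl]⟩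
        · rintro ⟨a, h⟩
          simp only [Option.some.injEq, Prod.mk.injEq] at h
          obtain ⟨rfl, rfl⟩ := h
          exact ⟨by simp, Or.inr (by simp)⟩
    rw [this, ← Set.image_univ, Set.ncard_image_of_injective]
    · simp
    · intro a b h; simpa using h
  · by_cases hm : m.1 % 2 = 0 ∧ m.1 < 2 * n
    · right
      rw [Set.ncard_eq_three]
      refine ⟨auxP _ (some (i, m)), some (i, ⟨m.1 + 1, by omega⟩), some (i, ⟨m.1 + 2, by omega⟩),
        ?_, ?_, ?_, ?_⟩
      · intro h
        have := auxR_lt _ (some (i, m)) (by simp)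
        rw [h] at this
        simp [auxR] at this
      · intro h
        have := auxR_lt _ (some (i, m)) (by simp)
        rw [h] at this
        simp [auxR] at this
      · simp
      · ext w
        have hne := auxP_ne _ (some (i, m)) (by simp)
        simp only [SimpleGraph.mem_neighborSet, SimpleGraph.fromRel_adj, Set.mem_insert_iff,
          Set.mem_singleton_iff]
        constructor
        · rintro ⟨h0, h | h⟩
          · exact Or.inl h.symm
          · right
            rcases w with _ | ⟨j, l⟩
            · simp [auxP] at h
            · simp only [auxP] at h
              split_ifs at h with hl
              simp only [Option.some.injEq, Prod.mk.injEq, Fin.ext_iff] at h ⊢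
              omega
        · rintro (rfl | rfl | rfl)
          · exact ⟨hne, Or.inl rfl⟩
          · refine ⟨by simp [Fin.ext_iff], Or.inr ?_⟩
            simp only [auxP]
            rw [if_neg (by omega)]
            simp only [Option.some.injEq, Prod.mk.injEq, Fin.ext_iff, true_and]
            omega
          · refine ⟨by simp [Fin.ext_iff], Or.inr ?_⟩
            simp only [auxP]
            rw [if_neg (by omega)]
            simp only [Option.some.injEq, Prod.mk.injEq, Fin.ext_iff, true_and]
            omega
    · left
      rw [Set.ncard_eq_one]
      refine ⟨auxP _ (some (i, m)), ?_⟩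
      ext w
      have hne := auxP_ne _ (some (i, m)) (by simp)
      simp only [SimpleGraph.mem_neighborSet, SimpleGraph.fromRel_adj, Set.mem_singleton_iff]
      constructor
      · rintro ⟨h0, h | h⟩
        · exact h.symm
        · rcases w with _ | ⟨j, l⟩
          · simp [auxP] at h
          · simp only [auxP] at h
            split_ifs at h with hl
            simp only [Option.some.injEq, Prod.mk.injEq, Fin.ext_iff] at h
            omega
      · rintro rfl
        exact ⟨hne, Or.inl rfl⟩

def auxS (n : ℕ) (i : Fin 3) : Set (Option (Fin 3 × Fin (2 * n + 1))) :=
  {v | ∀ j m, v = some (j, m) → j = i ∧ m.1 % 2 = 0}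

lemma auxS_conn (n : ℕ) (i : Fin 3) :
    ((⊤ : (auxT n).Subgraph).induce (auxS n i)).Connected := by
  rw [← SimpleGraph.connected_induce_iff]
  refine aux_conn _ (auxR _) none (auxR_lt _) _ (by simp [auxS]) ?_
  rintro (_ | ⟨j, m⟩) h
  · simp [auxP, auxS]
  · have := h j m rfl
    simp only [auxP]
    split_ifs
    · simp [auxS]
    · intro j' m' h'
      simp only [Option.some.injEq, Prod.mk.injEq, Fin.ext_iff] at h'
      constructor
      · rw [← this.1]; ext; exact h'.1.symm
      · omega

lemma auxL (n : ℕ) (i : Fin 3) (m : Fin n) :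
    (auxT n).Adj (some (i, ⟨2 * m.1 + 1, by omega⟩)) (some (i, ⟨2 * m.1, by omega⟩)) := by
  simp only [SimpleGraph.fromRel_adj]
  refine ⟨by simp, Or.inl ?_⟩
  simp [auxP]


/-- Let `G` be a split graph — `V(G)` partitioned into a clique `Cs = C(G)` and an
independent set `Is = I(G)` — with `|C(G)| = 3k`, `k ≥ 1`, and suppose `C(G)` can be
partitioned into three subsets `C 0, C 1, C 2`, each of size `k`, such that for each
`w ∈ I(G)` the neighborhood `N_G(w)` is contained in one of the three subsets. Then there
is a tree-representation `(T, {f x}_{x ∈ V(G)})` of `G` (T a finite ternary tree, each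
`f x` a nontrivial subtree, adjacent vertices of `G` getting subtrees sharing a vertex)
in which every edge of `T` belongs to at most `k` of the subtrees. -/
theorem split_graph_partition_tree_rep {α : Type} [Fintype α]
    (G : SimpleGraph α)
    (Cs Is : Set α) (hdisj : Disjoint Cs Is) (hcover : Cs ∪ Is = Set.univ)
    (hclique : G.IsClique Cs) (hindep : ∀ u ∈ Is, ∀ v ∈ Is, ¬ G.Adj u v)
    (k : ℕ) (hk : 1 ≤ k) (hCcard : Cs.ncard = 3 * k)
    (C : Fin 3 → Set α)
    (hCdisj : ∀ i j : Fin 3, i ≠ j → Disjoint (C i) (C j))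
    (hCunion : (⋃ i, C i) = Cs)
    (hCsize : ∀ i, (C i).ncard = k)
    (hnbhd : ∀ w ∈ Is, ∃ i : Fin 3, G.neighborSet w ⊆ C i) :
    ∃ (V : Type) (_ : Fintype V) (T : SimpleGraph V), T.IsTree ∧
      (∀ v : V, (T.neighborSet v).ncard = 1 ∨ (T.neighborSet v).ncard = 3) ∧
      ∃ f : α → T.Subgraph,
        (∀ x : α, (f x).Connected) ∧
        (∀ x : α, (f x).edgeSet.Nonempty) ∧
        (∀ u v : α, G.Adj u v → ((f u).verts ∩ (f v).verts).Nonempty) ∧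
        (∀ e ∈ T.edgeSet, {x : α | e ∈ (f x).edgeSet}.ncard ≤ k) := by

  classical
  have hg : ∀ x, ∃ i, x ∈ C i ∨ (x ∉ Cs ∧ G.neighborSet x ⊆ C i) := by
    intro x
    by_cases hx : x ∈ Cs
    · rw [← hCunion] at hx
      obtain ⟨i, hi⟩ := Set.mem_iUnion.1 hx
      exact ⟨i, Or.inl hi⟩
    · have : x ∈ Cs ∪ Is := by rw [hcover]; trivial
      obtain ⟨i, hi⟩ := hnbhd x (this.resolve_left hx)
      exact ⟨i, Or.inr ⟨hx, hi⟩⟩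
  choose g hg using hg
  have hsub : ∀ i, C i ⊆ Cs := fun i => hCunion ▸ Set.subset_iUnion C i
  have hgC : ∀ x ∈ Cs, x ∈ C (g x) := fun x hx => (hg x).resolve_right (fun h => h.1 hx)
  have hgu : ∀ x i, x ∈ C i → g x = i := by
    intro x i hx
    by_contra h
    exact Set.disjoint_left.1 (hCdisj _ _ h) (hgC x (hsub i hx)) hx
  let n := Fintype.card α
  let φ : α ≃ Fin n := Fintype.equivFin α
  let f : α → (auxT n).Subgraph := fun x =>
    if x ∈ Cs then (⊤ : (auxT n).Subgraph).induce (auxS n (g x))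
    else (auxT n).subgraphOfAdj (auxL n (g x) (φ x))
  have f1 : ∀ x ∈ Cs, f x = (⊤ : (auxT n).Subgraph).induce (auxS n (g x)) :=
    fun x hx => if_pos hx
  have f2 : ∀ x, x ∉ Cs → f x = (auxT n).subgraphOfAdj (auxL n (g x) (φ x)) :=
    fun x hx => if_neg hx
  have hmix : ∀ u v, u ∉ Cs → v ∈ Cs → G.Adj u v → ((f u).verts ∩ (f v).verts).Nonempty := by
    intro u v hu hv h
    have h1 : v ∈ C (g u) := ((hg u).resolve_left (fun h => hu (hsub _ h))).2 h
    have h2 := hgu v _ h1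
    rw [f2 u hu, f1 v hv, h2]
    refine ⟨some (g u, ⟨2 * (φ u).1, by omega⟩), ?_, ?_⟩
    · simp
    · intro j m h
      simp only [Option.some.injEq, Prod.mk.injEq] at h
      obtain ⟨rfl, rfl⟩ := h
      simp
  refine ⟨_, inferInstance, auxT n, aux_tree _ (auxR _) none (auxR_lt _) rfl, auxT_deg n, f,
    ?_, ?_, ?_, ?_⟩
  · intro x
    by_cases hx : x ∈ Cs
    · rw [f1 x hx]; exact auxS_conn _ _
    · rw [f2 x hx]; exact SimpleGraph.Subgraph.subgraphOfAdj_connected _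
  · intro x
    by_cases hx : x ∈ Cs
    · rw [f1 x hx]
      refine ⟨s(none, some (g x, 0)), ?_⟩
      simp only [SimpleGraph.Subgraph.mem_edgeSet, SimpleGraph.Subgraph.induce_adj,
        SimpleGraph.Subgraph.top_adj, SimpleGraph.fromRel_adj]
      refine ⟨by simp [auxS], ?_, by simp, Or.inr (by simp [auxP])⟩
      intro j m h
      simp only [Option.some.injEq, Prod.mk.injEq] at h
      obtain ⟨rfl, rfl⟩ := h
      simp
    · rw [f2 x hx]; simp
  · intro u v h
    by_cases hu : u ∈ Cs <;> by_cases hv : v ∈ Cs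
    · rw [f1 u hu, f1 v hv]
      exact ⟨none, by simp [auxS], by simp [auxS]⟩
    · rw [Set.inter_comm]; exact hmix v u hv hu h.symm
    · exact hmix u v hu hv h
    · have hu' : u ∈ Cs ∪ Is := by rw [hcover]; trivial
      have hv' : v ∈ Cs ∪ Is := by rw [hcover]; trivial
      exact absurd h (hindep u (hu'.resolve_left hu) v (hv'.resolve_left hv))
  · have key : ∀ v, v ≠ none → {x : α | s(v, auxP _ v) ∈ (f x).edgeSet}.ncard ≤ k := by
      rintro (_ | ⟨i, m⟩) hv
      · exact absurd rfl hv
      by_cases hm : m.1 % 2 = 0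
      · rw [← hCsize i]
        refine Set.ncard_le_ncard ?_ (Set.toFinite _)
        intro x hx
        simp only [Set.mem_setOf_eq] at hx
        by_cases hxc : x ∈ Cs
        · rw [f1 x hxc] at hx
          simp only [SimpleGraph.Subgraph.mem_edgeSet, SimpleGraph.Subgraph.induce_adj] at hx
          have := (hx.1 i m rfl).1
          rw [this]; exact hgC x hxc
        · rw [f2 x hxc] at hx
          exfalso
          simp only [SimpleGraph.edgeSet_subgraphOfAdj, Set.mem_singleton_iff] at hx
          rcases Sym2.eq_iff.1 hx with ⟨h, _⟩ | ⟨h1, h2⟩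
          · simp only [Option.some.injEq, Prod.mk.injEq, Fin.ext_iff] at h
            omega
          · have := auxR_lt _ (some (i, m)) (by simp)
            rw [h2, h1] at this
            simp [auxR] at this
      · refine le_trans ?_ hk
        rw [Set.ncard_le_one (Set.toFinite _)]
        have : ∀ x, s(some (i, m), auxP _ (some (i, m))) ∈ (f x).edgeSet →
            m.1 = 2 * (φ x).1 + 1 := by
          intro x hx
          by_cases hxc : x ∈ Cs
          · rw [f1 x hxc] at hx
            simp only [SimpleGraph.Subgraph.mem_edgeSet, SimpleGraph.Subgraph.induce_adj] at hx
            exact absurd (hx.1 i m rfl).2 hm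
          · rw [f2 x hxc] at hx
            simp only [SimpleGraph.edgeSet_subgraphOfAdj, Set.mem_singleton_iff] at hx
            rcases Sym2.eq_iff.1 hx with ⟨h, _⟩ | ⟨h1, h2⟩
            · simp only [Option.some.injEq, Prod.mk.injEq, Fin.ext_iff] at h
              omega
            · simp only [Option.some.injEq, Prod.mk.injEq, Fin.ext_iff] at h1
              omega
        intro a ha b hb
        have h1 := this a ha
        have h2 := this b hb
        exact φ.injective (Fin.ext (by omega))
    intro e he
    induction e with
    | _ a b =>
    simp only [SimpleGraph.mem_edgeSet, SimpleGraph.fromRel_adj] at he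
    obtain ⟨hne, h | h⟩ := he
    · rw [← h]
      exact key a (by rintro rfl; exact hne h)
    · rw [← h, Sym2.eq_swap]
      exact key b (by rintro rfl; exact hne h.symm)
end

section
/- Let G be a split graph with clique part C = C(G) of size 3k, k ≥ 1, let (T, {T_x}_{x∈V(G)}) be a tree-representation of G in which every edge of T belongs to at most k subtrees, and let v_0 be a vertex of T lying in T_x for every x ∈ C. Then v_0 has degree 3 in T; moreover, if e_1, e_2, e_3 are the three edges of T incident with v_0, then each e_i belongs to exactly k of the subtrees T_x with x ∈ C, and each subtree T_x with x ∈ C contains exactly one of the edges e_1, e_2, e_3. -/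
/-- Let `G` be a split graph — `V(G)` partitioned into a clique `Cs = C(G)` and an
independent set `Is = I(G)` — with `|C(G)| = 3k`, `k ≥ 1`, let `(T, {f x}_{x ∈ V(G)})` be
a tree-representation of `G` in which every edge of `T` belongs to at most `k` subtrees,
and let `v₀` be a vertex of `T` lying in `f x` for every `x ∈ C(G)`. Then `v₀` has
degree 3 in `T`; moreover each of the three edges of `T` incident with `v₀` belongs to
exactly `k` of the subtrees `f x` with `x ∈ C(G)`, and each subtree `f x` with
`x ∈ C(G)` contains exactly one of these incident edges. -/
theorem split_graph_center_vertex {α V : Type} [Fintype α] [Fintype V]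
    (G : SimpleGraph α)
    (Cs Is : Set α) (hdisj : Disjoint Cs Is) (hcover : Cs ∪ Is = Set.univ)
    (hclique : G.IsClique Cs) (hindep : ∀ u ∈ Is, ∀ v ∈ Is, ¬ G.Adj u v)
    (k : ℕ) (hk : 1 ≤ k) (hCcard : Cs.ncard = 3 * k)
    (T : SimpleGraph V) (hT : T.IsTree)
    (hternary : ∀ v : V, (T.neighborSet v).ncard = 1 ∨ (T.neighborSet v).ncard = 3)
    (f : α → T.Subgraph)
    (hconn : ∀ x : α, (f x).Connected)
    (hnontrivial : ∀ x : α, (f x).edgeSet.Nonempty)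
    (hadj : ∀ u v : α, G.Adj u v → ((f u).verts ∩ (f v).verts).Nonempty)
    (hload : ∀ e ∈ T.edgeSet, {x : α | e ∈ (f x).edgeSet}.ncard ≤ k)
    (v₀ : V) (hv₀ : ∀ x ∈ Cs, v₀ ∈ (f x).verts) :
    (T.neighborSet v₀).ncard = 3 ∧
    (∀ e ∈ T.incidenceSet v₀, {x : α | x ∈ Cs ∧ e ∈ (f x).edgeSet}.ncard = k) ∧
    (∀ x ∈ Cs, ∃! e : Sym2 V, e ∈ T.incidenceSet v₀ ∧ e ∈ (f x).edgeSet) := by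
  classical
  have key : ∀ x ∈ Cs, ∃ w, (f x).Adj v₀ w := by
    intro x hx
    obtain ⟨e, he⟩ := hnontrivial x
    induction e using Sym2.ind with
    | _ a b =>
      have hab : (f x).Adj a b := he
      by_cases hav : a = v₀
      · exact ⟨b, hav ▸ hab⟩
      · obtain ⟨p⟩ := (hconn x).coe.preconnected ⟨v₀, hv₀ x hx⟩ ⟨a, hab.fst_mem⟩
        cases p with
        | nil => exact absurd rfl hav
        | cons h _ => exact ⟨_, h⟩
  set C : Finset α := Finset.univ.filter (· ∈ Cs) with hC
  set N : Finset V := Finset.univ.filter (fun w => T.Adj v₀ w) with hN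
  have hCc : C.card = 3 * k := by
    rw [← hCcard, ← Set.ncard_coe_finset]; congr 1; ext; simp [hC]
  have hNc : (T.neighborSet v₀).ncard = N.card := by
    rw [← Set.ncard_coe_finset]; congr 1; ext; simp [hN]
  have hset : ∀ w, {x : α | x ∈ Cs ∧ s(v₀, w) ∈ (f x).edgeSet}.ncard
      = (C.filter (fun x => (f x).Adj v₀ w)).card := by
    intro w
    rw [← Set.ncard_coe_finset]; congr 1; ext; simp [hC]
  have hle : ∀ w ∈ N, (C.filter (fun x => (f x).Adj v₀ w)).card ≤ k := by
    intro w hw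
    rw [← hset]
    refine le_trans (Set.ncard_le_ncard (fun x hx => hx.2) (Set.toFinite _)) (hload s(v₀, w) ?_)
    simpa [hN] using hw
  have hge : ∀ x ∈ C, 1 ≤ (N.filter (fun w => (f x).Adj v₀ w)).card := by
    intro x hx
    obtain ⟨w, hw⟩ := key x (by simpa [hC] using hx)
    exact Finset.card_pos.2 ⟨w, by simpa [hN] using ⟨hw.adj_sub, hw⟩⟩
  have hdc : ∑ x ∈ C, (N.filter (fun w => (f x).Adj v₀ w)).card
      = ∑ w ∈ N, (C.filter (fun x => (f x).Adj v₀ w)).card :=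
    Finset.sum_card_bipartiteAbove_eq_sum_card_bipartiteBelow (fun x w => (f x).Adj v₀ w)
  have h1 : ∑ x ∈ C, 1 ≤ ∑ x ∈ C, (N.filter (fun w => (f x).Adj v₀ w)).card :=
    Finset.sum_le_sum hge
  have h2 : ∑ w ∈ N, (C.filter (fun x => (f x).Adj v₀ w)).card ≤ ∑ w ∈ N, k :=
    Finset.sum_le_sum hle
  have h1' : ∑ x ∈ C, 1 = 3 * k := by simp [hCc]
  have h2' : ∑ w ∈ N, k = N.card * k := by simp
  have hN3 : N.card = 3 := by
    rcases hternary v₀ with h | h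
    · rw [hNc] at h
      rw [h] at h2'
      omega
    · rw [← hNc, h]
  rw [hN3] at h2'
  have e1 := (Finset.sum_eq_sum_iff_of_le hge).1 (by omega)
  have e2 := (Finset.sum_eq_sum_iff_of_le hle).1 (by omega)
  refine ⟨by rw [hNc, hN3], ?_, ?_⟩
  · rintro e ⟨he, hv⟩
    obtain ⟨w, rfl⟩ := Sym2.mem_iff_exists.1 hv
    rw [hset]
    exact e2 w (by simpa [hN] using he)
  · intro x hx
    obtain ⟨w, hw⟩ := Finset.card_eq_one.1 (e1 x (by simpa [hC] using hx)).symm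
    have hmem : ∀ u, (f x).Adj v₀ u ↔ u = w := by
      intro u
      rw [← Finset.mem_singleton, ← hw]
      simp only [hN, Finset.mem_filter, Finset.mem_univ, true_and]
      exact ⟨fun h => ⟨h.adj_sub, h⟩, fun h => h.2⟩
    have hw' := (hmem w).2 rfl
    refine ⟨s(v₀, w), ⟨⟨hw'.adj_sub, Sym2.mem_mk_left _ _⟩, hw'⟩, ?_⟩
    rintro e ⟨⟨_, hv⟩, he⟩
    obtain ⟨u, rfl⟩ := Sym2.mem_iff_exists.1 hv
    rw [(hmem u).1 he]
end

section
/- Let s_1, ..., s_m be positive integers with ∑_{i=1}^m s_i = 3k for a positive integer k, and let G be the split graph constructed as follows: take a complete graph on a vertex set V of size 3k, partition V into sets V_1, ..., V_m with |V_i| = s_i, and add m new pairwise nonadjacent vertices i_1, ..., i_m, joining i_j to all vertices of V_j for each j. Then mmw(G) = k if and only if the multiset {s_1, ..., s_m} can be partitioned into three sub-multisets S_1, S_2, S_3 with equal sums, i.e., ∑_{s∈S_1} s = ∑_{s∈S_2} s = ∑_{s∈S_3} s = k. -/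
/-- The maximum matching width `mmw G`: the minimum over all branch-decompositions
`(T, L)` over `V(G)` — `T` a finite ternary tree (all degrees 1 or 3) together with a
bijection `L` between `V(G)` and the leaves of `T` — of the maximum, over the edges of
`T`, of `mm G` applied to the part of the partition of `V(G)` induced by that edge. -/
noncomputable def mmw {α : Type} [Fintype α] (G : SimpleGraph α) : ℕ :=
  sInf {k : ℕ | ∃ (V : Type) (_ : Fintype V) (T : SimpleGraph V), T.IsTree ∧
    (∀ v : V, (T.neighborSet v).ncard = 1 ∨ (T.neighborSet v).ncard = 3) ∧
    ∃ L : α ≃ {v : V // (T.neighborSet v).ncard = 1},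
      ∀ a b : V, T.Adj a b →
        mm G {x : α | (T.deleteEdges {s(a, b)}).Reachable (L x : V) a} ≤ k}

namespace P3
open SimpleGraph

abbrev side {V : Type} (T : SimpleGraph V) (a b : V) : Set V :=
  {x | (T.deleteEdges {s(a, b)}).Reachable x a}

lemma reach_ind {V : Type} {G : SimpleGraph V} {a : V} {P : V → Prop} (h0 : P a)
    (hs : ∀ x y, G.Adj x y → G.Reachable y a → P y → P x) {x : V} (h : G.Reachable x a) : P x := by
  rw [reachable_iff_reflTransGen] at h
  induction h using Relation.ReflTransGen.head_induction_on with
  | refl => exact h0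
  | head h1 h2 ih => exact hs _ _ h1 ((reachable_iff_reflTransGen _ _).2 h2) ih

lemma bridge {V : Type} {T : SimpleGraph V} (hT : T.IsTree) {a b : V} (h : T.Adj a b) :
    ¬ (T.deleteEdges {s(a, b)}).Reachable a b := by
  have := isAcyclic_iff_forall_adj_isBridge.1 hT.isAcyclic h
  rw [isBridge_iff] at this
  exact this

lemma side_or {V : Type} {T : SimpleGraph V} (hT : T.IsTree) {a b : V} (x : V) :
    x ∈ side T a b ∨ x ∈ side T b a := by
  have hx : T.Reachable x a := hT.1.preconnected x a
  refine reach_ind (P := fun x => x ∈ side T a b ∨ x ∈ side T b a) (Or.inl (Reachable.refl _)) ?_ hx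
  intro x y hxy _ ih
  by_cases he : s(x, y) = s(a, b)
  · rw [Sym2.eq_iff] at he
    rcases he with ⟨rfl, rfl⟩ | ⟨rfl, rfl⟩
    · exact Or.inl (Reachable.refl _)
    · exact Or.inr (Reachable.refl _)
  · rcases ih with ih | ih
    · left
      refine Reachable.trans (Adj.reachable ?_) ih
      simp [deleteEdges_adj, hxy]; simpa using he
    · right
      refine Reachable.trans (Adj.reachable ?_) ih
      rw [Sym2.eq_swap] at he ⊢
      rw [deleteEdges_adj]
      refine ⟨hxy, ?_⟩
      rw [Set.mem_singleton_iff]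
      intro h; apply he; rw [Sym2.eq_swap, h]; 

lemma side_not {V : Type} {T : SimpleGraph V} (hT : T.IsTree) {a b : V} (h : T.Adj a b) {x : V}
    (h1 : x ∈ side T a b) (h2 : x ∈ side T b a) : False := by
  apply bridge hT h
  simp only [side, Set.mem_ofPred_eq] at h1 h2
  rw [Sym2.eq_swap] at h2
  exact h1.symm.trans h2

lemma side_iff {V : Type} {T : SimpleGraph V} (hT : T.IsTree) {a b : V} (h : T.Adj a b) (x : V) :
    x ∈ side T a b ↔ x ∉ side T b a :=
  ⟨fun h1 h2 => side_not hT h h1 h2, fun h1 => (side_or hT x).resolve_right h1⟩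

lemma side_sub {V : Type} {T : SimpleGraph V} (hT : T.IsTree) {a b c : V}
    (hc : T.Adj c a) (hcb : c ≠ b) {x : V} (hx : x ∈ side T c a) : x ∈ side T a b := by
  have key : ∀ y, (T.deleteEdges {s(c, a)}).Reachable y c → y ≠ a := by
    rintro y hy rfl
    exact bridge hT hc hy.symm
  refine reach_ind (P := fun x => x ∈ side T a b) ?_ ?_ hx
  · refine Adj.reachable ?_
    rw [deleteEdges_adj]
    refine ⟨hc, ?_⟩
    simp [hcb, hc.ne]
  · intro x y hxy hy ih
    refine Reachable.trans (Adj.reachable ?_) ih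
    have h1 := key y hy
    have h2 := key x (hxy.reachable.trans hy)
    rw [deleteEdges_adj] at hxy ⊢
    refine ⟨hxy.1, ?_⟩
    simp [h1, h2]

lemma side_cases {V : Type} {T : SimpleGraph V} {a b : V}
    {x : V} (hx : x ∈ side T a b) : x = a ∨ ∃ c, T.Adj c a ∧ c ≠ b ∧ x ∈ side T c a := by
  refine reach_ind (P := fun x => x = a ∨ ∃ c, T.Adj c a ∧ c ≠ b ∧ x ∈ side T c a)
    (Or.inl rfl) ?_ hx
  intro x y hxy _ ih
  rw [deleteEdges_adj] at hxy
  obtain ⟨h1, h2⟩ := hxy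
  rcases ih with rfl | ⟨c, hc, hcb, hy⟩
  · right
    refine ⟨x, h1, ?_, Reachable.refl _⟩
    rintro rfl
    exact h2 (by simp [Sym2.eq_swap])
  · by_cases he : s(x, y) = s(c, a)
    · rw [Sym2.eq_iff] at he
      rcases he with ⟨rfl, rfl⟩ | ⟨rfl, rfl⟩
      · exact Or.inr ⟨x, hc, hcb, Reachable.refl _⟩
      · exact Or.inl rfl
    · right
      refine ⟨c, hc, hcb, Reachable.trans (Adj.reachable ?_) hy⟩
      rw [deleteEdges_adj]
      exact ⟨h1, he⟩

lemma mm_bdd {α : Type} [Fintype α] (G : SimpleGraph α) (A : Set α) :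
    BddAbove {n : ℕ | ∃ M : G.Subgraph, M.IsMatching ∧
    (∀ u v : α, M.Adj u v → (u ∈ A ↔ v ∉ A)) ∧ M.edgeSet.ncard = n} := by
  refine ⟨(Set.univ : Set (Sym2 α)).ncard, ?_⟩
  rintro n ⟨M, -, -, rfl⟩
  exact Set.ncard_le_ncard (Set.subset_univ _) (Set.toFinite _)

lemma mm_lower {α : Type} [Fintype α] (G : SimpleGraph α) (A : Set α) (P : Finset α) (f : α → α)
    (h1 : ∀ x ∈ P, x ∈ A) (h2 : ∀ x ∈ P, f x ∉ A) (h3 : ∀ x ∈ P, G.Adj x (f x))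
    (h4 : Set.InjOn f P) : P.card ≤ mm G A := by
  classical
  let M : G.Subgraph :=
    { verts := {u | u ∈ P ∨ ∃ v ∈ P, f v = u}
      Adj := fun u v => (u ∈ P ∧ v = f u) ∨ (v ∈ P ∧ u = f v)
      adj_sub := by
        rintro u v (⟨h, rfl⟩ | ⟨h, rfl⟩)
        · exact h3 _ h
        · exact (h3 _ h).symm
      edge_vert := by
        rintro u v (⟨h, rfl⟩ | ⟨h, rfl⟩)
        · exact Or.inl h
        · exact Or.inr ⟨v, h, rfl⟩
      symm := ⟨fun u v h => h.symm⟩ }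
  have hM : M.IsMatching := by
    rintro u (hu | ⟨v, hv, rfl⟩)
    · refine ⟨f u, Or.inl ⟨hu, rfl⟩, ?_⟩
      rintro y (⟨_, rfl⟩ | ⟨hy, rfl⟩)
      · rfl
      · exact absurd (h1 _ hu) (h2 _ hy)
    · refine ⟨v, Or.inr ⟨hv, rfl⟩, ?_⟩
      rintro y (⟨hy, _⟩ | ⟨hy, he⟩)
      · exact absurd (h1 _ hy) (h2 _ hv)
      · exact (h4 hv hy he).symm
  have hc : ∀ u v : α, M.Adj u v → (u ∈ A ↔ v ∉ A) := by
    rintro u v (⟨h, rfl⟩ | ⟨h, rfl⟩)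
    · have := h1 _ h; have := h2 _ h; tauto
    · have := h1 _ h; have := h2 _ h; tauto
  have hle : P.card ≤ M.edgeSet.ncard := by
    rw [← Set.ncard_coe_finset]
    refine Set.ncard_le_ncard_of_injOn (fun x => s(x, f x)) ?_ ?_ (Set.toFinite _)
    · intro x hx
      exact Or.inl ⟨hx, rfl⟩
    · intro x hx y hy he
      simp only [Sym2.eq_iff] at he
      rcases he with ⟨h, _⟩ | ⟨h, _⟩
      · exact h
      · exact absurd (h ▸ h1 _ hx) (h2 _ hy)
  exact hle.trans (le_csSup (mm_bdd G A) ⟨M, hM, hc, rfl⟩)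

lemma mm_upper {α : Type} [Fintype α] (G : SimpleGraph α) (A : Set α) (X : Set α)
    (h : ∀ u v, G.Adj u v → u ∈ A → v ∉ A → u ∈ X ∨ v ∈ X) : mm G A ≤ X.ncard := by
  classical
  refine csSup_le' ?_
  rintro n ⟨M, hM, hc, rfl⟩
  have hch : ∀ e : Sym2 α, ∃ x, e ∈ M.edgeSet → x ∈ X ∧ x ∈ e := by
    intro e
    by_cases hE : e ∈ M.edgeSet
    swap
    · exact ⟨e.out.1, fun h => absurd h hE⟩
    suffices h : ∃ x, x ∈ X ∧ x ∈ e from h.imp fun _ h _ => h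
    revert hE
    induction e using Sym2.ind with
    | _ u v =>
      intro he
      have he' : M.Adj u v := he
      have h1 := hc u v he'
      by_cases hu : u ∈ A
      · rcases h u v he'.adj_sub hu (h1.1 hu) with h | h
        · exact ⟨u, h, by simp⟩
        · exact ⟨v, h, by simp⟩
      · have hv : v ∈ A := by tauto
        rcases h v u he'.adj_sub.symm hv hu with h | h
        · exact ⟨v, h, by simp⟩
        · exact ⟨u, h, by simp⟩
  choose g hg using hch
  refine Set.ncard_le_ncard_of_injOn g (fun e he => (hg e he).1) ?_ (Set.toFinite _)
  intro e he e' he' hee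
  have a1 := (hg e he).2
  have a2 := (hg e' he').2
  rw [← hee] at a2
  generalize g e = x at a1 a2
  obtain ⟨y, rfl⟩ := Sym2.mem_iff_exists.1 a1
  obtain ⟨z, rfl⟩ := Sym2.mem_iff_exists.1 a2
  rw [hM.eq_of_adj_left (show M.Adj x y from he) (show M.Adj x z from he')]

/-- The sink lemma. -/
lemma sink {α V : Type} [Fintype α] [Fintype V] {T : SimpleGraph V} (hT : T.IsTree)
    (hdeg : ∀ v : V, (T.neighborSet v).ncard = 1 ∨ (T.neighborSet v).ncard = 3)
    (L : α ≃ {v : V // (T.neighborSet v).ncard = 1}) (C : Set α) (k : ℕ) (hk : 0 < k)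
    (hC : C.ncard = 3 * k)
    (hw : ∀ a b, T.Adj a b → {x | x ∈ C ∧ (L x : V) ∈ side T a b}.ncard ≤ k ∨
      {x | x ∈ C ∧ (L x : V) ∈ side T b a}.ncard ≤ k) :
    ∃ (a : V) (n : Fin 3 → V), (∀ i, T.Adj (n i) a) ∧
      (∀ i, {x | x ∈ C ∧ (L x : V) ∈ side T (n i) a}.ncard = k) ∧
      (∀ i j x, x ∈ side T (n i) a → x ∈ side T (n j) a → i = j) ∧
      (∀ x : α, ∃ i, (L x : V) ∈ side T (n i) a) := by
  classical
  set w : V → V → ℕ := fun a b => {x | x ∈ C ∧ (L x : V) ∈ side T a b}.ncard with hwdef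
  have hsum : ∀ a b, T.Adj a b → w a b + w b a = 3 * k := by
    intro a b hab
    rw [← hC, hwdef]
    dsimp only
    rw [← Set.ncard_union_eq ?_ (Set.toFinite _) (Set.toFinite _)]
    · congr 1
      ext x
      have := side_or hT (a := a) (b := b) (L x : V)
      simp only [Set.mem_union, Set.mem_ofPred_eq] at this ⊢
      tauto
    · rw [Set.disjoint_left]
      rintro x ⟨_, h1⟩ ⟨_, h2⟩
      exact side_not hT hab h1 h2
  -- pick an edge
  have hex : ∃ p : V × V, T.Adj p.1 p.2 ∧ k < w p.1 p.2 := by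
    have hne : C.Nonempty := by
      rw [← Set.ncard_pos]; omega
    obtain ⟨x, hx⟩ := hne
    have : (T.neighborSet (L x : V)).Nonempty := by
      rw [← Set.ncard_pos, (L x).2]; exact one_pos
    obtain ⟨b, hb⟩ := this
    have hb' : T.Adj (L x : V) b := hb
    by_cases h : k < w (L x) b
    · exact ⟨⟨_, _⟩, hb', h⟩
    · refine ⟨⟨_, _⟩, hb'.symm, ?_⟩
      have := hsum _ _ hb'
      have h' : ¬ k < w (L x).1 b := h
      show k < w b (L x).1
      omega
  obtain ⟨⟨a, b⟩, ⟨hab, hkw⟩, hmin⟩ := Set.exists_min_image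
    {p : V × V | T.Adj p.1 p.2 ∧ k < w p.1 p.2} (fun p => (side T p.1 p.2).ncard) (Set.toFinite _) hex
  dsimp only at hab hkw
  have hba : w b a ≤ k := by
    rcases hw a b hab with h | h
    · exact absurd h (not_le.2 hkw)
    · exact h
  have hs := hsum a b hab
  have hchild : ∀ c, T.Adj c a → c ≠ b → w c a ≤ k := by
    intro c hc hcb
    by_contra hcon
    have := hmin (c, a) ⟨hc, by simpa using hcon⟩
    dsimp only at this
    have h2 : (side T c a).ncard < (side T a b).ncard := by
      apply Set.ncard_lt_ncard _ (Set.toFinite _)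
      refine ⟨fun x hx => side_sub hT hc hcb hx, fun hsub => ?_⟩
      exact side_not hT hc (hsub (Reachable.refl a)) (Reachable.refl a)
    omega
  have hdeg3 : (T.neighborSet a).ncard = 3 := by
    rcases hdeg a with h | h
    swap
    · exact h
    exfalso
    obtain ⟨y, hy⟩ := Set.ncard_eq_one.1 h
    have hby : ∀ c, T.Adj a c → c = b := by
      intro c hc
      have h1 : c ∈ T.neighborSet a := hc
      have h2 : b ∈ T.neighborSet a := hab
      rw [hy] at h1 h2
      exact h1.trans h2.symm
    have : w a b ≤ 1 := by
      refine (Set.ncard_le_one_iff (Set.toFinite _)).2 ?_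
      rintro x y ⟨_, hx⟩ ⟨_, hy⟩
      have e : ∀ z, z ∈ side T a b → z = a := by
        intro z hz
        rcases side_cases hz with h | ⟨c, hc, hcb, _⟩
        · exact h
        · exact absurd (hby c hc.symm) hcb
      exact L.injective (Subtype.ext ((e _ hx).trans (e _ hy).symm))
    omega
  have hrem : ∃ c d, c ≠ d ∧ c ≠ b ∧ d ≠ b ∧ T.neighborSet a = {b, c, d} := by
    have hb : b ∈ T.neighborSet a := hab
    have : (T.neighborSet a \ {b}).ncard = 2 := by
      rw [Set.ncard_sdiff_singleton_of_mem hb, hdeg3]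
    obtain ⟨c, d, hcd, he⟩ := Set.ncard_eq_two.1 this
    refine ⟨c, d, hcd, ?_, ?_, ?_⟩
    · have : c ∈ T.neighborSet a \ {b} := by rw [he]; simp
      exact this.2
    · have : d ∈ T.neighborSet a \ {b} := by rw [he]; simp
      exact this.2
    · rw [← he, Set.insert_sdiff_singleton, Set.insert_eq_of_mem hb]
  obtain ⟨c, d, hcd, hcb, hdb, hN⟩ := hrem
  have hca : T.Adj c a := by
    have : c ∈ T.neighborSet a := by rw [hN]; simp
    exact SimpleGraph.Adj.symm this
  have hda : T.Adj d a := by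
    have : d ∈ T.neighborSet a := by rw [hN]; simp
    exact SimpleGraph.Adj.symm this
  have hLa : ∀ x, (L x : V) ≠ a := by
    intro x hx
    have := (L x).2
    rw [hx] at this
    omega
  have hle : w a b ≤ w c a + w d a := by
    refine le_trans (Set.ncard_le_ncard ?_ (Set.toFinite _)) (Set.ncard_union_le _ _)
    rintro x ⟨hx, hs⟩
    rcases side_cases hs with h | ⟨e, he, heb, hxe⟩
    · exact absurd h (hLa x)
    · have : e ∈ T.neighborSet a := he.symm
      rw [hN] at this
      rcases this with h | h | h
      · exact absurd h heb
      · subst h; exact Or.inl ⟨hx, hxe⟩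
      · rw [Set.mem_singleton_iff] at h; subst h; exact Or.inr ⟨hx, hxe⟩
  have hc1 := hchild c hca hcb
  have hd1 := hchild d hda hdb
  have hadj : ∀ i, T.Adj (![b, c, d] i) a := by
    intro i; fin_cases i
    exacts [hab.symm, hca, hda]
  have hinj : ∀ i j, ![b, c, d] i = ![b, c, d] j → i = j := by
    intro i j
    fin_cases i <;> fin_cases j <;> simp [hcd, hcb, hdb, hcd.symm, hcb.symm, hdb.symm]
  refine ⟨a, ![b, c, d], hadj, ?_, ?_, ?_⟩
  · intro i
    fin_cases i
    · show w b a = k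
      omega
    · show w c a = k
      omega
    · show w d a = k
      omega
  · intro i j x hi hj
    by_contra hij
    have h1 := side_sub hT (hadj i) (fun h => hij (hinj i j h)) hi
    exact side_not hT (hadj j) hj h1
  · intro x
    rcases side_or hT (a := a) (b := b) (L x : V) with h | h
    · rcases side_cases h with h | ⟨e, he, heb, hxe⟩
      · exact absurd h (hLa x)
      · have : e ∈ T.neighborSet a := he.symm
        rw [hN] at this
        rcases this with h | h | h
        · exact absurd h heb
        · subst h; exact ⟨1, hxe⟩
        · rw [Set.mem_singleton_iff] at h; subst h; exact ⟨2, hxe⟩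
    · exact ⟨0, h⟩

/-- graph of a parent function -/
def pgraph {V : Type} (r : V) (par : V → V) : SimpleGraph V where
  Adj x y := x ≠ y ∧ ((x ≠ r ∧ par x = y) ∨ (y ≠ r ∧ par y = x))
  symm := ⟨fun _ _ h => ⟨h.1.symm, h.2.symm⟩⟩
  loopless := ⟨fun _ h => h.1 rfl⟩

def desc {V : Type} (r : V) (par : V → V) : V → V → Prop :=
  Relation.ReflTransGen (fun x y => x ≠ r ∧ par x = y)

lemma desc_rank {V : Type} {r : V} {par : V → V} {rk : V → ℕ}
    (hrk : ∀ x, x ≠ r → rk (par x) < rk x) {x v : V} (h : desc r par x v) : rk v ≤ rk x := by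
  unfold desc at h
  induction h using Relation.ReflTransGen.head_induction_on with
  | refl => exact le_rfl
  | head h1 h2 ih =>
    obtain ⟨h1, rfl⟩ := h1
    have := hrk _ h1
    omega

lemma desc_side {V : Type} {r : V} {par : V → V} {v : V} (_hv : v ≠ r) {x : V}
    (hx : x ∈ side (pgraph r par) v (par v)) : desc r par x v := by
  refine reach_ind (P := fun x => desc r par x v) Relation.ReflTransGen.refl ?_ hx
  intro x y hxy _ ih
  rw [deleteEdges_adj] at hxy
  obtain ⟨⟨hne, h⟩, he⟩ := hxy
  rcases h with ⟨h1, h2⟩ | ⟨h1, rfl⟩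
  · exact Relation.ReflTransGen.head ⟨h1, h2⟩ ih
  · rcases Relation.ReflTransGen.cases_head ih with rfl | ⟨c, ⟨_, rfl⟩, hc⟩
    · exact absurd (Sym2.eq_swap) he
    · exact hc

lemma pgraph_tree {V : Type} {r : V} {par : V → V} {rk : V → ℕ}
    (hrk : ∀ x, x ≠ r → rk (par x) < rk x) : (pgraph r par).IsTree := by
  have hroot : ∀ n x, rk x = n → (pgraph r par).Reachable x r := by
    intro n
    induction n using Nat.strong_induction_on with
    | _ n ih =>
      intro x hx
      by_cases h : x = r
      · rw [h]
      · have h1 := hrk x h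
        refine Reachable.trans (Adj.reachable ⟨?_, Or.inl ⟨h, rfl⟩⟩) (ih _ (hx ▸ h1) (par x) rfl)
        intro h2
        rw [← h2] at h1
        exact lt_irrefl _ h1
  have hb : ∀ v, v ≠ r → ¬ ((pgraph r par).deleteEdges {s(v, par v)}).Reachable (par v) v := by
    intro v hv h
    have := desc_rank hrk (desc_side hv h)
    have := hrk v hv
    omega
  haveI : Nonempty V := ⟨r⟩
  refine ⟨⟨fun x y => (hroot _ x rfl).trans (hroot _ y rfl).symm⟩, ?_⟩
  rw [isAcyclic_iff_forall_adj_isBridge]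
  rintro u v ⟨_, ⟨h, rfl⟩ | ⟨h, rfl⟩⟩
  · rw [isBridge_iff]
    exact fun h' => hb _ h h'.symm
  · rw [Sym2.eq_swap, isBridge_iff]
    exact fun h' => hb _ h h'.symm

lemma desc_col {V : Type} {r : V} {par : V → V} {β : Type} {col : V → β}
    (hcol : ∀ x, x ≠ r → par x ≠ r → col (par x) = col x) {v : V} (hv : v ≠ r) {x : V}
    (h : desc r par x v) : col x = col v := by
  have : x ≠ r ∧ col x = col v := by
    unfold desc at h
    induction h using Relation.ReflTransGen.head_induction_on with
    | refl => exact ⟨hv, rfl⟩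
    | head h1 h2 ih =>
      obtain ⟨h1, rfl⟩ := h1
      exact ⟨h1, (hcol _ h1 ih.1).symm.trans ih.2⟩
  exact this.2

inductive Node (n : Fin 3 → ℕ) : Type
  | root : Node n
  | leaf (i : Fin 3) (j : ℕ) (h : j < n i) : Node n
  | spine (i : Fin 3) (j : ℕ) (h : j + 1 < n i) : Node n

namespace Node
variable {n : Fin 3 → ℕ}

def code : Node n → Option ((Σ i, Fin (n i)) ⊕ (Σ i, Fin (n i)))
  | root => none
  | leaf i j h => some (Sum.inl ⟨i, ⟨j, h⟩⟩)
  | spine i j h => some (Sum.inr ⟨i, ⟨j, Nat.lt_of_succ_lt h⟩⟩)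

lemma code_inj : Function.Injective (code (n := n)) := by
  intro x y h
  cases x with
  | root => cases y <;> simp [code] at h ⊢
  | leaf i j hj =>
    cases y <;> simp only [code, Option.some.injEq, Sum.inl.injEq, Sigma.mk.injEq, reduceCtorEq] at h
    obtain ⟨rfl, h⟩ := h
    simpa using h
  | spine i j hj =>
    cases y <;> simp only [code, Option.some.injEq, Sum.inr.injEq, Sigma.mk.injEq, reduceCtorEq] at h
    obtain ⟨rfl, h⟩ := h
    simpa using h

noncomputable instance : Fintype (Node n) := Fintype.ofInjective code code_inj

def pred (i : Fin 3) : (j : ℕ) → j < n i → Node n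
  | 0, _ => root
  | j + 1, h => spine i j h

def node (i : Fin 3) (j : ℕ) (h : j < n i) : Node n :=
  if h' : j + 1 < n i then spine i j h' else leaf i j h

def par : Node n → Node n
  | root => root
  | leaf i j h => if h' : j + 1 < n i then spine i j h' else pred i j h
  | spine i j h => pred i j (Nat.lt_of_succ_lt h)

def rk : Node n → ℕ
  | root => 0
  | leaf _ j _ => j + 2
  | spine _ j _ => j + 1

def col : Node n → Fin 3
  | root => 0
  | leaf i _ _ => i
  | spine i _ _ => i

lemma rk_lt (x : Node n) (hx : x ≠ root) : rk (par x) < rk x := by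
  cases x with
  | root => exact absurd rfl hx
  | leaf i j h =>
    simp only [par]
    split_ifs
    · simp [rk]
    · cases j <;> simp [pred, rk]
  | spine i j h => cases j <;> simp [par, pred, rk]

lemma col_par (x : Node n) (hx : x ≠ root) (hp : par x ≠ root) : col (par x) = col x := by
  cases x with
  | root => exact absurd rfl hx
  | leaf i j h =>
    simp only [par] at hp ⊢
    split_ifs at hp ⊢
    · simp [col]
    · cases j <;> simp_all [pred, col]
  | spine i j h => cases j <;> simp_all [par, pred, col]

abbrev tr (n : Fin 3 → ℕ) : SimpleGraph (Node n) := pgraph root par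

lemma tr_tree : (tr n).IsTree := pgraph_tree rk_lt

lemma adj_iff (x y : Node n) : (tr n).Adj x y ↔ (x ≠ root ∧ par x = y) ∨ (y ≠ root ∧ par y = x) := by
  refine ⟨fun h => h.2, fun h => ⟨?_, h⟩⟩
  rintro rfl
  have : x ≠ root ∧ par x = x := by tauto
  have h2 := rk_lt x this.1
  rw [this.2] at h2
  exact lt_irrefl _ h2

lemma par_eq_leaf (x : Node n) (i j h) (hx : x ≠ root) : par x ≠ leaf i j h := by
  cases x with
  | root => exact absurd rfl hx
  | leaf i j h =>
    simp only [par]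
    split_ifs
    · simp
    · cases j <;> simp [pred]
  | spine i j h => cases j <;> simp [par, pred]

lemma deg_leaf (i j h) : ((tr n).neighborSet (leaf i j h)).ncard = 1 := by
  rw [Set.ncard_eq_one]
  refine ⟨par (leaf i j h), ?_⟩
  ext y
  rw [mem_neighborSet, adj_iff, Set.mem_singleton_iff]
  constructor
  · rintro (⟨_, h⟩ | ⟨h1, h2⟩)
    · exact h.symm
    · exact absurd h2 (par_eq_leaf _ _ _ _ h1)
  · rintro rfl
    exact Or.inl ⟨by simp, rfl⟩

lemma node_ne_root (i j h) : node (n := n) i j h ≠ root := by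
  unfold node; split_ifs <;> simp

lemma col_node (i j h) : col (node (n := n) i j h) = i := by
  unfold node; split_ifs <;> simp [col]

lemma par_node (i j h) : par (node (n := n) i j h) = pred i j h := by
  unfold node; split_ifs with h' <;> simp [par, h']

lemma par_eq_root (hn : ∀ i, 0 < n i) (x : Node n) (hx : x ≠ root) :
    par x = root ↔ ∃ i, x = node i 0 (hn i) := by
  constructor
  · intro h
    cases x with
    | root => exact absurd rfl hx
    | leaf i j hj =>
      simp only [par] at h
      split_ifs at h with h'
      cases j with
      | zero => exact ⟨i, by simp [node]; omega⟩
      | succ j => simp [pred] at h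
    | spine i j hj =>
      cases j with
      | zero => exact ⟨i, by simp [node]; omega⟩
      | succ j => simp [par, pred] at h
  · rintro ⟨i, rfl⟩
    rw [par_node]; rfl

lemma par_eq_spine (i j h) (x : Node n) (hx : x ≠ root) :
    par x = spine i j h ↔ x = leaf i j (Nat.lt_of_succ_lt h) ∨ x = node i (j+1) h := by
  constructor
  · intro hh
    cases x with
    | root => exact absurd rfl hx
    | leaf i' j' hj =>
      simp only [par] at hh
      split_ifs at hh with h'
      · left; simp at hh ⊢; exact hh
      cases j' with
      | zero => simp [pred] at hh
      | succ j' =>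
        simp only [pred, spine.injEq] at hh
        obtain ⟨rfl, rfl⟩ := hh
        right; simp [node]; omega
    | spine i' j' hj =>
      cases j' with
      | zero => simp [par, pred] at hh
      | succ j' =>
        simp only [par, pred, spine.injEq] at hh
        obtain ⟨rfl, rfl⟩ := hh
        right; simp [node, hj]
  · rintro (rfl | rfl)
    · simp [par, h]
    · rw [par_node]; rfl

lemma deg_root (hn : ∀ i, 0 < n i) : ((tr n).neighborSet root).ncard = 3 := by
  rw [Set.ncard_eq_three]
  have hne : ∀ i j : Fin 3, i ≠ j → node i 0 (hn i) ≠ node j 0 (hn j) := by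
    intro i j hij h
    apply hij
    rw [← col_node i 0 (hn i), h, col_node]
  refine ⟨node 0 0 (hn 0), node 1 0 (hn 1), node 2 0 (hn 2), hne _ _ (by decide),
    hne _ _ (by decide), hne _ _ (by decide), ?_⟩
  ext y
  rw [mem_neighborSet, adj_iff]
  simp only [Set.mem_insert_iff, Set.mem_singleton_iff]
  constructor
  · rintro (⟨h, _⟩ | ⟨h1, h2⟩)
    · exact absurd rfl h
    · obtain ⟨i, rfl⟩ := (par_eq_root hn y h1).1 h2
      fin_cases i <;> simp
  · intro h
    have : ∃ i, y = node i 0 (hn i) := by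
      rcases h with h | h | h
      exacts [⟨_, h⟩, ⟨_, h⟩, ⟨_, h⟩]
    have hy : y ≠ root := by
      obtain ⟨i, rfl⟩ := this
      exact node_ne_root _ _ _
    exact Or.inr ⟨hy, (par_eq_root hn y hy).2 this⟩

lemma deg_spine (i j h) : ((tr n).neighborSet (spine i j h)).ncard = 3 := by
  rw [Set.ncard_eq_three]
  refine ⟨leaf i j (Nat.lt_of_succ_lt h), node i (j+1) h, par (spine i j h), ?_, ?_, ?_, ?_⟩
  · unfold node; split_ifs <;> simp
  · exact (par_eq_leaf _ _ _ _ (by simp)).symm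
  · intro he
    have h1 := rk_lt (spine i j h) (by simp)
    rw [← he] at h1
    unfold node at h1
    split_ifs at h1 <;> simp [rk] at h1 <;> omega
  · ext y
    rw [mem_neighborSet, adj_iff]
    simp only [Set.mem_insert_iff, Set.mem_singleton_iff]
    constructor
    · rintro (⟨_, h⟩ | ⟨h1, h2⟩)
      · exact Or.inr (Or.inr h.symm)
      · have := (par_eq_spine i j h y h1).1 h2
        tauto
    · rintro (hy | hy | hy)
      · have h1 : y ≠ root := by rw [hy]; simp
        exact Or.inr ⟨h1, (par_eq_spine i j h y h1).2 (Or.inl hy)⟩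
      · have h1 : y ≠ root := by rw [hy]; exact node_ne_root _ _ _
        exact Or.inr ⟨h1, (par_eq_spine i j h y h1).2 (Or.inr hy)⟩
      · exact Or.inl ⟨by simp, hy.symm⟩

noncomputable def leafEquiv (hn : ∀ i, 0 < n i) :
    (Σ i, Fin (n i)) ≃ {v : Node n // ((tr n).neighborSet v).ncard = 1} :=
  Equiv.ofBijective (fun p => ⟨leaf p.1 p.2.1 p.2.2, deg_leaf _ _ _⟩) (by
    constructor
    · rintro ⟨i, j, hj⟩ ⟨i', j', hj'⟩ h
      simp only [Subtype.mk.injEq, leaf.injEq] at h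
      obtain ⟨rfl, rfl⟩ := h
      rfl
    · rintro ⟨v, hv⟩
      cases v with
      | root => rw [deg_root hn] at hv; omega
      | leaf i j h => exact ⟨⟨i, ⟨j, h⟩⟩, rfl⟩
      | spine i j h => rw [deg_spine] at hv; omega)

end Node

lemma exists_tree {α : Type} [Fintype α] (cls : α → Fin 3) (hs : Function.Surjective cls) :
    ∃ (V : Type) (_ : Fintype V) (T : SimpleGraph V), T.IsTree ∧
    (∀ v : V, (T.neighborSet v).ncard = 1 ∨ (T.neighborSet v).ncard = 3) ∧
    ∃ L : α ≃ {v : V // (T.neighborSet v).ncard = 1},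
      ∀ a b : V, T.Adj a b →
        (∃ i, ∀ x, (L x : V) ∈ side T a b → cls x = i) ∨
        (∃ i, ∀ x, (L x : V) ∉ side T a b → cls x = i) := by
  classical
  let n : Fin 3 → ℕ := fun i => Fintype.card {x // cls x = i}
  have hn : ∀ i, 0 < n i := fun i => by
    obtain ⟨x, hx⟩ := hs i
    exact Fintype.card_pos_iff.2 ⟨⟨x, hx⟩⟩
  let e : α ≃ Σ i, Fin (n i) := (Equiv.sigmaFiberEquiv cls).symm.trans
    (Equiv.sigmaCongrRight fun i => Fintype.equivFin _)
  have he : ∀ x, (e x).1 = cls x := fun x => rfl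
  have hcol : ∀ x, Node.col ((e.trans (Node.leafEquiv hn)) x : Node n) = cls x := fun x => rfl
  refine ⟨Node n, inferInstance, Node.tr n, Node.tr_tree, ?_, e.trans (Node.leafEquiv hn), ?_⟩
  · intro v
    cases v with
    | root => exact Or.inr (Node.deg_root hn)
    | leaf i j h => exact Or.inl (Node.deg_leaf i j h)
    | spine i j h => exact Or.inr (Node.deg_spine i j h)
  · intro a b hab
    have hab' := hab.2
    rcases hab' with ⟨h, rfl⟩ | ⟨h, rfl⟩
    · left
      refine ⟨Node.col a, fun x hx => ?_⟩
      rw [← hcol]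
      exact desc_col Node.col_par h (desc_side h hx)
    · right
      refine ⟨Node.col b, fun x hx => ?_⟩
      rw [← hcol]
      refine desc_col Node.col_par h (desc_side h ?_)
      exact (side_iff Node.tr_tree hab.symm _).2 hx

lemma map_add_split {ι : Type} [DecidableEq ι] (s : ι → ℕ) : ∀ (S₁ S₂ : Multiset ℕ) (X : Finset ι),
    S₁ + S₂ = Multiset.map s X.val →
    ∃ X₁ : Finset ι, X₁ ⊆ X ∧ Multiset.map s X₁.val = S₁ ∧ Multiset.map s (X \ X₁).val = S₂ := by
  intro S₁
  induction S₁ using Multiset.induction_on with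
  | empty => 
    intro S₂ X h
    exact ⟨∅, by simp, by simp, by simpa using h.symm⟩
  | cons a S₁ ih =>
    intro S₂ X h
    have ha : a ∈ Multiset.map s X.val := by rw [← h]; simp
    obtain ⟨i, hi, rfl⟩ := Multiset.mem_map.1 ha
    have hi' : i ∈ X := hi
    have h2 : S₁ + S₂ = Multiset.map s (X.erase i).val := by
      rw [← Finset.insert_erase hi', Finset.insert_val_of_notMem (by simp), Multiset.map_cons,
        Multiset.cons_add] at h
      exact (Multiset.cons_inj_right _).1 h
    obtain ⟨X₁, hX, e1, e2⟩ := ih S₂ _ h2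
    have hn : i ∉ X₁ := fun h => by simpa using hX h
    refine ⟨insert i X₁, ?_, ?_, ?_⟩
    · intro x hx
      rcases Finset.mem_insert.1 hx with rfl | hx
      · exact hi'
      · exact Finset.mem_of_mem_erase (hX hx)
    · rw [Finset.insert_val_of_notMem hn, Multiset.map_cons, e1]
    · rw [← e2]
      congr 2
      ext x; simp; tauto

lemma exists_inj {α : Type} (P Q : Finset α) (h : P.card ≤ Q.card) :
    ∃ f : α → α, (∀ x ∈ P, f x ∈ Q) ∧ Set.InjOn f P := by
  classical
  obtain ⟨g⟩ : Nonempty (P ↪ Q) := Function.Embedding.nonempty_of_card_le (by simpa using h)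
  refine ⟨fun x => if h : x ∈ P then g ⟨x, h⟩ else x, ?_, ?_⟩
  · intro x hx
    simp [hx]
  · intro x hx y hy he
    have hx' : x ∈ P := hx
    have hy' : y ∈ P := hy
    simp only [hx', hy', dif_pos] at he
    simpa using g.injective (Subtype.ext he)

lemma cut_lower {α : Type} [Fintype α] (G : SimpleGraph α) (C A : Set α)
    (hC : ∀ u v, u ∈ C → v ∈ C → u ≠ v → G.Adj u v) (k : ℕ)
    (h1 : k ≤ {x | x ∈ C ∧ x ∈ A}.ncard) (h2 : k ≤ {x | x ∈ C ∧ x ∉ A}.ncard) : k ≤ mm G A := by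
  classical
  rw [Set.ncard_eq_toFinset_card'] at h1 h2
  obtain ⟨P, hP, hPk⟩ := Finset.exists_subset_card_eq h1
  obtain ⟨f, hf, hinj⟩ := exists_inj P _ (hPk.trans_le h2)
  have hP' : ∀ x ∈ P, x ∈ C ∧ x ∈ A := fun x hx => by
    have h := hP hx
    rw [Set.mem_toFinset] at h
    exact h
  have hf' : ∀ x ∈ P, f x ∈ C ∧ f x ∉ A := fun x hx => by simpa using hf x hx
  rw [← hPk]
  refine mm_lower G A P f (fun x hx => (hP' x hx).2) (fun x hx => (hf' x hx).2) ?_ hinj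
  intro x hx
  refine hC _ _ (hP' x hx).1 (hf' x hx).1 ?_
  intro he
  have := (hf' x hx).2
  rw [← he] at this
  exact this (hP' x hx).2

lemma cut_lower' {α : Type} [Fintype α] (G : SimpleGraph α) (C A : Set α)
    (hC : ∀ u v, u ∈ C → v ∈ C → u ≠ v → G.Adj u v) (k : ℕ) (p v : α) (hp : p ∈ A) (hpC : p ∉ C)
    (hv : v ∉ A) (hpv : G.Adj p v)
    (h1 : {x | x ∈ C ∧ x ∈ A}.ncard = k) (h2 : k + 1 ≤ {x | x ∈ C ∧ x ∉ A}.ncard) :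
    k + 1 ≤ mm G A := by
  classical
  rw [Set.ncard_eq_toFinset_card'] at h1 h2
  set P := {x | x ∈ C ∧ x ∈ A}.toFinset with hPdef
  set Q := {x | x ∈ C ∧ x ∉ A}.toFinset
  have hQ : P.card ≤ (Q.erase v).card := by
    have := Finset.pred_card_le_card_erase (s := Q) (a := v)
    omega
  obtain ⟨f, hf, hinj⟩ := exists_inj P _ hQ
  have hP' : ∀ x ∈ P, x ∈ C ∧ x ∈ A := fun x hx => by simpa [P] using hx
  have hf' : ∀ x ∈ P, f x ≠ v ∧ f x ∈ C ∧ f x ∉ A := fun x hx => by simpa [Q] using hf x hx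
  have hpP : p ∉ P := fun h => hpC (hP' p h).1
  have hne : ∀ x ∈ P, x ≠ p := fun x hx h => hpP (h ▸ hx)
  rw [← h1, ← Finset.card_insert_of_notMem hpP]
  refine mm_lower G A _ (Function.update f p v) ?_ ?_ ?_ ?_
  · intro x hx
    rcases Finset.mem_insert.1 hx with rfl | hx
    · exact hp
    · exact (hP' x hx).2
  · intro x hx
    rcases Finset.mem_insert.1 hx with rfl | hx
    · simpa using hv
    · rw [Function.update_of_ne (hne x hx)]
      exact (hf' x hx).2.2
  · intro x hx
    rcases Finset.mem_insert.1 hx with rfl | hx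
    · simpa using hpv
    · rw [Function.update_of_ne (hne x hx)]
      refine hC _ _ (hP' x hx).1 (hf' x hx).2.1 ?_
      intro he
      have := (hf' x hx).2.2
      rw [← he] at this
      exact this (hP' x hx).2
  · intro x hx y hy he
    rcases Finset.mem_insert.1 hx with hx1 | hx1 <;>
      rcases Finset.mem_insert.1 hy with hy1 | hy1
    · rw [hx1, hy1]
    · rw [hx1, Function.update_self, Function.update_of_ne (hne y hy1)] at he
      exact absurd he.symm (hf' y hy1).1
    · rw [hy1, Function.update_self, Function.update_of_ne (hne x hx1)] at he
      exact absurd he (hf' x hx1).1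
    · rw [Function.update_of_ne (hne x hx1), Function.update_of_ne (hne y hy1)] at he
      exact hinj hx1 hy1 he

lemma ncard_bUnion {α : Type} [Fintype α] {m : ℕ} (V : Fin m → Set α)
    (hVdisj : ∀ i j : Fin m, i ≠ j → Disjoint (V i) (V j)) (J : Finset (Fin m)) :
    {x | ∃ j ∈ J, x ∈ V j}.ncard = ∑ j ∈ J, (V j).ncard := by
  classical
  induction J using Finset.induction_on with
  | empty => simp
  | insert a J ha ih =>
    rw [Finset.sum_insert ha, ← ih, ← Set.ncard_union_eq ?_ (Set.toFinite _) (Set.toFinite _)]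
    · congr 1
      ext x
      simp
    · rw [Set.disjoint_left]
      rintro x hx ⟨j, hj, hxj⟩
      exact Set.disjoint_left.1 (hVdisj a j (fun h => ha (h ▸ hj))) hx hxj
end P3

/-- Let `s 1, …, s m` be positive integers with `∑ s i = 3k`, `k ≥ 1`, and let `G` be the
split graph constructed as follows: take a complete graph on a vertex set of size `3k`
partitioned into sets `V 1, …, V m` with `|V j| = s j`, and add `m` new pairwise
nonadjacent vertices `I 1, …, I m`, joining `I j` to all vertices of `V j`. Then
`mmw G = k` if and only if the multiset `{s 1, …, s m}` can be partitioned into three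
sub-multisets with equal sums (necessarily `k` each). -/
theorem mmw_constructed_split_graph_iff_partition3 {α : Type} [Fintype α]
    (m k : ℕ) (hk : 0 < k)
    (s : Fin m → ℕ) (hspos : ∀ i, 0 < s i) (hsum : ∑ i, s i = 3 * k)
    (G : SimpleGraph α) (V : Fin m → Set α) (I : Fin m → α)
    (hVcard : ∀ i, (V i).ncard = s i)
    (hVdisj : ∀ i j : Fin m, i ≠ j → Disjoint (V i) (V j))
    (hIinj : Function.Injective I)
    (hIV : ∀ i j, I i ∉ V j)
    (hcover : ∀ a : α, (∃ i, a ∈ V i) ∨ (∃ i, a = I i))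
    (hadj : ∀ u v : α, G.Adj u v ↔
      (u ≠ v ∧ (∃ i, u ∈ V i) ∧ (∃ i, v ∈ V i)) ∨
      (∃ j, u = I j ∧ v ∈ V j) ∨ (∃ j, v = I j ∧ u ∈ V j)) :
    mmw G = k ↔
      ∃ S₁ S₂ S₃ : Multiset ℕ,
        S₁ + S₂ + S₃ = Multiset.map s Finset.univ.val ∧
        S₁.sum = k ∧ S₂.sum = k ∧ S₃.sum = k := by
  classical
  set C : Set α := {a | ∃ i, a ∈ V i} with hCdef
  have hCcard : C.ncard = 3 * k := by
    have := P3.ncard_bUnion V hVdisj Finset.univ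
    simp only [Finset.mem_univ, true_and, hVcard, hsum] at this
    exact this
  have hCadj : ∀ u v, u ∈ C → v ∈ C → u ≠ v → G.Adj u v := by
    intro u v hu hv huv
    rw [hadj]
    exact Or.inl ⟨huv, hu, hv⟩
  have hVuniq : ∀ i j x, x ∈ V i → x ∈ V j → i = j := by
    intro i j x hi hj
    by_contra h
    exact Set.disjoint_left.1 (hVdisj i j h) hi hj
  have hcompl : ∀ A : Set α, {x | x ∈ C ∧ x ∈ A}.ncard + {x | x ∈ C ∧ x ∉ A}.ncard = 3 * k := by
    intro A
    rw [← hCcard, ← Set.ncard_inter_add_ncard_sdiff_eq_ncard C A (Set.toFinite _)]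
    rfl
  have core : ∀ w : ℕ, w ≤ k → (∃ (V : Type) (_ : Fintype V) (T : SimpleGraph V), T.IsTree ∧
    (∀ v : V, (T.neighborSet v).ncard = 1 ∨ (T.neighborSet v).ncard = 3) ∧
    ∃ L : α ≃ {v : V // (T.neighborSet v).ncard = 1},
      ∀ a b : V, T.Adj a b →
        mm G {x : α | (T.deleteEdges {s(a, b)}).Reachable (L x : V) a} ≤ w) →
      k ≤ w ∧ ∃ S₁ S₂ S₃ : Multiset ℕ,
        S₁ + S₂ + S₃ = Multiset.map s Finset.univ.val ∧
        S₁.sum = k ∧ S₂.sum = k ∧ S₃.sum = k := by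
    rintro w hwk ⟨N, _, T, hT, hdeg, L, hL⟩
    have hw : ∀ a b, T.Adj a b → {x | x ∈ C ∧ (L x : N) ∈ P3.side T a b}.ncard ≤ k ∨
      {x | x ∈ C ∧ (L x : N) ∈ P3.side T b a}.ncard ≤ k := by
      intro a b hab
      by_contra! hcon
      obtain ⟨h1, h2⟩ := hcon
      have h2' : {x | x ∈ C ∧ (L x : N) ∈ P3.side T b a} =
          {x | x ∈ C ∧ x ∉ {x : α | (T.deleteEdges {s(a, b)}).Reachable (L x : N) a}} := by
        ext x
        have := P3.side_iff hT hab.symm (L x : N)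
        simp only [Set.mem_ofPred_eq] at this ⊢
        rw [this]
      rw [h2'] at h2
      have := P3.cut_lower G C {x : α | (T.deleteEdges {s(a, b)}).Reachable (L x : N) a} hCadj
        (k + 1) h1 h2
      have := hL a b hab
      omega
    obtain ⟨a, n, hn1, hn2, hn3, hn4⟩ := P3.sink hT hdeg L C k hk hCcard hw
    set A : Fin 3 → Set α := fun i => {x | (L x : N) ∈ P3.side T (n i) a} with hA
    have hAk : ∀ i, {x | x ∈ C ∧ x ∈ A i}.ncard = k := hn2
    have hAc : ∀ i, {x | x ∈ C ∧ x ∉ A i}.ncard = 2 * k := fun i => by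
      have := hcompl (A i)
      have := hAk i
      omega
    have hAm : ∀ i, mm G (A i) ≤ w := fun i => hL (n i) a (hn1 i)
    have hAu : ∀ i j x, x ∈ A i → x ∈ A j → i = j := fun i j x => hn3 i j (L x)
    have hAe : ∀ x, ∃ i, x ∈ A i := hn4
    refine ⟨?_, ?_⟩
    · refine le_trans (P3.cut_lower G C (A 0) hCadj k (hAk 0).ge ?_) (hAm 0)
      rw [hAc]; omega
    choose c hc using fun j => hAe (I j)
    have hVA : ∀ j v, v ∈ V j → v ∈ A (c j) := by
      intro j v hv
      by_contra hcon
      have := P3.cut_lower' G C (A (c j)) hCadj k (I j) v (hc j)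
        (by rintro ⟨i, hi⟩; exact hIV _ _ hi) hcon
        (by rw [hadj]; exact Or.inr (Or.inl ⟨j, rfl, hv⟩)) (hAk _) (by rw [hAc]; omega)
      have := hAm (c j)
      omega
    have hsumc : ∀ i, (Multiset.map s (Finset.univ.filter fun j => c j = i).val).sum = k := by
      intro i
      have h1 := P3.ncard_bUnion V hVdisj (Finset.univ.filter fun j => c j = i)
      simp only [hVcard] at h1
      change ∑ j ∈ (Finset.univ.filter fun j => c j = i), s j = k
      rw [← h1, ← hAk i]
      congr 1
      ext x
      simp only [Set.mem_ofPred_eq, Finset.mem_filter, Finset.mem_univ, true_and]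
      constructor
      · rintro ⟨j, rfl, hx⟩
        exact ⟨⟨j, hx⟩, hVA j x hx⟩
      · rintro ⟨⟨j, hx⟩, hxA⟩
        exact ⟨j, hAu _ _ x (hVA j x hx) hxA, hx⟩
    refine ⟨_, _, _, ?_, hsumc 0, hsumc 1, hsumc 2⟩
    rw [← Multiset.map_add, ← Multiset.map_add]
    congr 1
    ext j
    simp only [Finset.filter_val, Multiset.count_add, Multiset.count_filter]
    generalize c j = i
    fin_cases i <;> simp
  constructor
  · intro h
    have hne : 0 < mmw G := by omega
    have hmem := Nat.sInf_mem (Nat.nonempty_of_pos_sInf hne)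
    change mmw G ∈ _ at hmem
    rw [h] at hmem
    exact (core k le_rfl hmem).2
  · rintro ⟨S₁, S₂, S₃, hS, h1, h2, h3⟩
    rw [add_assoc] at hS
    obtain ⟨X₁, -, e1, hS'⟩ := P3.map_add_split s _ _ _ hS
    obtain ⟨X₂, hX₂, e2, e3⟩ := P3.map_add_split s _ _ _ hS'.symm
    let c : Fin m → Fin 3 := fun j => if j ∈ X₁ then 0 else if j ∈ X₂ then 1 else 2
    have hc : ∀ i, ∑ j ∈ (Finset.univ.filter fun j => c j = i), s j = k := by
      intro i
      fin_cases i
      · rw [← h1, ← e1]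
        change _ = ∑ j ∈ X₁, s j
        congr 1
        ext j
        by_cases h : j ∈ X₁ <;> by_cases h' : j ∈ X₂ <;> simp [c, h, h']
      · rw [← h2, ← e2]
        change _ = ∑ j ∈ X₂, s j
        congr 1
        ext j
        have := @hX₂ j
        by_cases h : j ∈ X₁ <;> by_cases h' : j ∈ X₂ <;> simp [c, h, h'] at this ⊢
      · rw [← h3, ← e3]
        change _ = ∑ j ∈ ((Finset.univ \ X₁) \ X₂), s j
        congr 1
        ext j
        by_cases h : j ∈ X₁ <;> by_cases h' : j ∈ X₂ <;> simp [c, h, h']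
    have hidx : ∀ a : α, ∃ j, a ∈ V j ∨ a = I j := by
      intro a
      rcases hcover a with ⟨i, h⟩ | ⟨i, h⟩
      exacts [⟨i, Or.inl h⟩, ⟨i, Or.inr h⟩]
    choose idx hidx using hidx
    have idxV : ∀ j x, x ∈ V j → idx x = j := by
      intro j x hx
      rcases hidx x with h | h
      · exact hVuniq _ _ x h hx
      · rw [h] at hx
        exact absurd hx (hIV _ _)
    have idxI : ∀ j, idx (I j) = j := by
      intro j
      rcases hidx (I j) with h | h
      · exact absurd h (hIV _ _)
      · exact (hIinj h).symm
    have hsurj : Function.Surjective (fun x => c (idx x)) := by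
      intro i
      have : (Finset.univ.filter fun j => c j = i).Nonempty := by
        rw [Finset.nonempty_iff_ne_empty]
        intro he
        have := hc i
        rw [he, Finset.sum_empty] at this
        omega
      obtain ⟨j, hj⟩ := this
      refine ⟨I j, ?_⟩
      simpa [idxI] using hj
    let X : Fin 3 → Set α := fun i => {x | ∃ j ∈ (Finset.univ.filter fun j => c j = i), x ∈ V j}
    have hX : ∀ i, (X i).ncard = k := by
      intro i
      rw [P3.ncard_bUnion V hVdisj]
      simp only [hVcard]
      exact hc i
    have hXcov : ∀ i u v, G.Adj u v → c (idx u) = i → u ∈ X i ∨ v ∈ X i := by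
      intro i u v huv hu
      rw [hadj] at huv
      rcases huv with ⟨_, ⟨j, hj⟩, _⟩ | ⟨j, rfl, hj⟩ | ⟨j, rfl, hj⟩
      · left
        rw [idxV j u hj] at hu
        exact ⟨j, by simpa using hu, hj⟩
      · right
        rw [idxI] at hu
        exact ⟨j, by simpa using hu, hj⟩
      · left
        rw [idxV j u hj] at hu
        exact ⟨j, by simpa using hu, hj⟩
    obtain ⟨N, hN, T, hT, hdeg, L, hL⟩ := P3.exists_tree (fun x => c (idx x)) hsurj
    have hmem : ∃ (V : Type) (_ : Fintype V) (T : SimpleGraph V), T.IsTree ∧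
      (∀ v : V, (T.neighborSet v).ncard = 1 ∨ (T.neighborSet v).ncard = 3) ∧
      ∃ L : α ≃ {v : V // (T.neighborSet v).ncard = 1},
        ∀ a b : V, T.Adj a b →
          mm G {x : α | (T.deleteEdges {s(a, b)}).Reachable (L x : V) a} ≤ k := by
      refine ⟨N, hN, T, hT, hdeg, L, ?_⟩
      intro a b hab
      rcases hL a b hab with ⟨i, hi⟩ | ⟨i, hi⟩
      · rw [← hX i]
        exact P3.mm_upper G _ _ fun u v huv hu _ => hXcov i u v huv (hi u hu)
      · rw [← hX i]
        exact P3.mm_upper G _ _ fun u v huv _ hv => (hXcov i v u huv.symm (hi v hv)).symm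
    refine le_antisymm (Nat.sInf_le hmem) ?_
    refine le_csInf ⟨k, hmem⟩ ?_
    intro w hw
    rcases le_total w k with h | h
    · exact (core w h hw).1
    · exact h
end
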